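/- Let k ≥ 3 be an integer with k ∉ {4,5}. For all sufficiently large n, if G is an n-vertex W_{2k+1}-free simple graph attaining the maximum spectral radius among all n-vertex W_{2k+1}-free graphs and V(G) = S ⊔ T is a maximum cut of G, then there exists a vertex of internal degree exactly k − 1; that is, there is v ∈ S with d_S(v) = k − 1 or v ∈ T with d_T(v) = k − 1. -/

import Mathlib

/-- The wheel graph on `t` vertices: vertex `0` joined to every vertex of the
cycle `1, 2, …, t-1` (with `t-1` adjacent to `1`). -/
def wheelGraph (t : ℕ) : SimpleGraph (Fin t) where
  Adj a b := a ≠ b ∧ (a.val = 0 ∨ b.val = 0 ∨ a.val + 1 = b.val ∨ b.val + 1 = a.val ∨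
      (a.val = 1 ∧ b.val = t - 1) ∨ (b.val = 1 ∧ a.val = t - 1))
  symm := by
    refine ⟨?_⟩
    intro a b h
    exact ⟨h.1.symm, by tauto⟩
  loopless := by
    refine ⟨?_⟩
    intro a h
    exact h.1 rfl

/-- `G` contains a copy of `F`, i.e. a subgraph isomorphic to `F`. -/
def ContainsCopy {α β : Type*} (F : SimpleGraph α) (G : SimpleGraph β) : Prop :=
  ∃ f : α ↪ β, ∀ a b, F.Adj a b → G.Adj (f a) (f b)

/-- `G` is `W_t`-free: it contains no subgraph isomorphic to the wheel on `t` vertices. -/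
def WheelFree (t : ℕ) {n : ℕ} (G : SimpleGraph (Fin n)) : Prop :=
  ¬ ContainsCopy (wheelGraph t) G

/-- The spectral radius of `G`: the largest eigenvalue of its adjacency matrix. -/
noncomputable def lam1 {n : ℕ} (G : SimpleGraph (Fin n)) : ℝ := by
  classical
  exact sSup {μ : ℝ | Module.End.HasEigenvalue (Matrix.toLin' (G.adjMatrix ℝ)) μ}

/-- The number of edges of a graph on a finite vertex type. -/
noncomputable def edgeCount {V : Type*} [Fintype V] (G : SimpleGraph V) : ℕ := by
  classical
  exact G.edgeFinset.card

/-- The degree of a vertex. -/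
noncomputable def deg {n : ℕ} (G : SimpleGraph (Fin n)) (v : Fin n) : ℕ := by
  classical
  exact G.degree v

/-- The number of neighbours of `v` inside the set `A`. -/
noncomputable def degIn {n : ℕ} (G : SimpleGraph (Fin n)) (A : Finset (Fin n)) (v : Fin n) : ℕ := by
  classical
  exact (A.filter fun u => G.Adj v u).card

/-- The number of edges of `G` with one endpoint in `S` and the other outside `S`. -/
noncomputable def cutCount {n : ℕ} (G : SimpleGraph (Fin n)) (S : Finset (Fin n)) : ℕ := by
  classical
  exact ((Finset.univ : Finset (Fin n × Fin n)).filter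
    fun p => G.Adj p.1 p.2 ∧ p.1 ∈ S ∧ p.2 ∉ S).card

/-- `(S, T)` is a maximum cut of `G`. -/
def IsMaxCut {n : ℕ} (G : SimpleGraph (Fin n)) (S T : Finset (Fin n)) : Prop :=
  T = Sᶜ ∧ ∀ S' : Finset (Fin n), cutCount G S' ≤ cutCount G S

/-- `G` attains the maximum spectral radius among all `n`-vertex `W_t`-free graphs. -/
def IsSpexWheel (t : ℕ) {n : ℕ} (G : SimpleGraph (Fin n)) : Prop :=
  WheelFree t G ∧ ∀ H : SimpleGraph (Fin n), WheelFree t H → lam1 H ≤ lam1 G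

/-- `G` attains the maximum number of edges among all `n`-vertex `W_t`-free graphs. -/
def IsExWheel (t : ℕ) {n : ℕ} (G : SimpleGraph (Fin n)) : Prop :=
  WheelFree t G ∧ ∀ H : SimpleGraph (Fin n), WheelFree t H → edgeCount H ≤ edgeCount G




section Spectral
open Classical

lemma lam1_facts {n : ℕ} (hn : 0 < n) (G : SimpleGraph (Fin n)) :
    Module.End.HasEigenvalue (Matrix.toLin' (G.adjMatrix ℝ)) (lam1 G) ∧
    ∀ μ : ℝ, Module.End.HasEigenvalue (Matrix.toLin' (G.adjMatrix ℝ)) μ → μ ≤ lam1 G := by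
  have hfin : Set.Finite {μ : ℝ | Module.End.HasEigenvalue (Matrix.toLin' (G.adjMatrix ℝ)) μ} :=
    Module.End.finite_hasEigenvalue _
  have hne : Set.Nonempty {μ : ℝ | Module.End.HasEigenvalue (Matrix.toLin' (G.adjMatrix ℝ)) μ} := by
    have hH : (G.adjMatrix ℝ).IsHermitian := by
      have := G.isSymm_adjMatrix (α := ℝ)
      rw [Matrix.IsHermitian, Matrix.conjTranspose_eq_transpose_of_trivial]; exact this
    refine ⟨hH.eigenvalues ⟨0, hn⟩, ?_⟩
    refine Module.End.hasEigenvalue_of_hasEigenvector (x := (hH.eigenvectorBasis ⟨0, hn⟩).ofLp) ?_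
    refine ⟨?_, ?_⟩
    · rw [Module.End.mem_eigenspace_iff, Matrix.toLin'_apply]
      exact hH.mulVec_eigenvectorBasis _
    · intro h
      have := hH.eigenvectorBasis.orthonormal.ne_zero ⟨0, hn⟩
      apply this
      ext i
      exact congrFun h i
  exact ⟨hne.csSup_mem hfin, fun μ h => le_csSup hfin.bddAbove h⟩

lemma mulVec_eq {n : ℕ} (G : SimpleGraph (Fin n)) (x : Fin n → ℝ) (v : Fin n) :
    (G.adjMatrix ℝ).mulVec x v = ∑ u ∈ Finset.univ.filter (fun u => G.Adj v u), x u := by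
  rw [SimpleGraph.adjMatrix_mulVec_apply]
  apply Finset.sum_congr _ (fun _ _ => rfl)
  ext u; simp

lemma psd {n : ℕ} (hn : 0 < n) (G : SimpleGraph (Fin n)) :
    (lam1 G • (1 : Matrix (Fin n) (Fin n) ℝ) - G.adjMatrix ℝ).PosSemidef := by
  have hM : (lam1 G • (1 : Matrix (Fin n) (Fin n) ℝ) - G.adjMatrix ℝ).IsHermitian := by
    have := G.isSymm_adjMatrix (α := ℝ)
    rw [Matrix.IsHermitian, Matrix.conjTranspose_eq_transpose_of_trivial]
    rw [Matrix.transpose_sub, this, Matrix.transpose_smul, Matrix.transpose_one]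
  rw [hM.posSemidef_iff_eigenvalues_nonneg]
  intro i
  have h1 := hM.mulVec_eigenvectorBasis i
  have h2 : lam1 G - hM.eigenvalues i ≤ lam1 G := by
    apply (lam1_facts hn G).2
    refine Module.End.hasEigenvalue_of_hasEigenvector (x := (hM.eigenvectorBasis i).ofLp) ?_
    refine ⟨?_, ?_⟩
    · rw [Module.End.mem_eigenspace_iff, Matrix.toLin'_apply]
      rw [Matrix.sub_mulVec, Matrix.smul_mulVec, Matrix.one_mulVec] at h1
      rw [sub_smul, ← h1]
      abel
    · intro h
      have := hM.eigenvectorBasis.orthonormal.ne_zero i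
      apply this
      ext j
      exact congrFun h j
  show 0 ≤ hM.eigenvalues i
  linarith

lemma quad_eq {n : ℕ} (G : SimpleGraph (Fin n)) (y : Fin n → ℝ) (l : ℝ) :
    star y ⬝ᵥ ((l • (1 : Matrix (Fin n) (Fin n) ℝ) - G.adjMatrix ℝ).mulVec y) =
    l * ∑ v, y v ^ 2 - ∑ v, y v * ∑ u ∈ Finset.univ.filter (fun u => G.Adj v u), y u := by
  rw [Matrix.sub_mulVec, Matrix.smul_mulVec, Matrix.one_mulVec]
  simp only [dotProduct, Pi.star_apply, star_trivial, Pi.sub_apply, Pi.smul_apply, smul_eq_mul,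
    mulVec_eq]
  rw [Finset.mul_sum, ← Finset.sum_sub_distrib]
  exact Finset.sum_congr rfl (fun _ _ => by ring)

lemma rayleigh_le {n : ℕ} (hn : 0 < n) (G : SimpleGraph (Fin n)) (y : Fin n → ℝ) :
    ∑ v, y v * ∑ u ∈ Finset.univ.filter (fun u => G.Adj v u), y u ≤ lam1 G * ∑ v, y v ^ 2 := by
  have h := (psd hn G).dotProduct_mulVec_nonneg y
  rw [quad_eq] at h
  linarith

lemma le_lam1_of_eig {n : ℕ} (hn : 0 < n) (G : SimpleGraph (Fin n)) (y : Fin n → ℝ) (μ : ℝ)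
    (hy : ∃ v, y v ≠ 0)
    (h : ∀ v, ∑ u ∈ Finset.univ.filter (fun u => G.Adj v u), y u = μ * y v) : μ ≤ lam1 G := by
  apply (lam1_facts hn G).2
  refine Module.End.hasEigenvalue_of_hasEigenvector (x := y) ⟨?_, ?_⟩
  · rw [Module.End.mem_eigenspace_iff, Matrix.toLin'_apply]
    ext v
    rw [mulVec_eq, h]; rfl
  · rintro rfl
    obtain ⟨v, hv⟩ := hy
    exact hv rfl

lemma perron {n : ℕ} (hn : 0 < n) (G : SimpleGraph (Fin n)) :
    ∃ x : Fin n → ℝ, (∀ v, 0 ≤ x v ∧ x v ≤ 1) ∧ (∃ z, x z = 1) ∧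
      ∀ v, ∑ u ∈ Finset.univ.filter (fun u => G.Adj v u), x u = lam1 G * x v := by
  obtain ⟨y, hy1, hy2⟩ := (lam1_facts hn G).1.exists_hasEigenvector
  rw [Module.End.mem_eigenspace_iff, Matrix.toLin'_apply] at hy1
  have e1 : ∀ v, ∑ u ∈ Finset.univ.filter (fun u => G.Adj v u), y u = lam1 G * y v := by
    intro v
    have := congrFun hy1 v
    rwa [mulVec_eq] at this
  let w : Fin n → ℝ := fun v => |y v|
  have hw0 : star w ⬝ᵥ ((lam1 G • (1 : Matrix (Fin n) (Fin n) ℝ) - G.adjMatrix ℝ).mulVec w) = 0 := by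
    apply le_antisymm _ ((psd hn G).dotProduct_mulVec_nonneg w)
    rw [quad_eq]
    have a1 : ∑ v, w v ^ 2 = ∑ v, y v ^ 2 := Finset.sum_congr rfl (fun v _ => sq_abs _)
    have a2 : lam1 G * ∑ v, y v ^ 2 =
      ∑ v, y v * ∑ u ∈ Finset.univ.filter (fun u => G.Adj v u), y u := by
      rw [Finset.mul_sum]
      exact Finset.sum_congr rfl (fun v _ => by rw [e1]; ring)
    have a3 : ∑ v, y v * ∑ u ∈ Finset.univ.filter (fun u => G.Adj v u), y u ≤
        ∑ v, w v * ∑ u ∈ Finset.univ.filter (fun u => G.Adj v u), w u := by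
      apply Finset.sum_le_sum
      intro v _
      calc _ ≤ |y v * ∑ u ∈ Finset.univ.filter (fun u => G.Adj v u), y u| := le_abs_self _
        _ = w v * |∑ u ∈ Finset.univ.filter (fun u => G.Adj v u), y u| := abs_mul _ _
        _ ≤ _ := by
          apply mul_le_mul_of_nonneg_left _ (abs_nonneg _)
          exact Finset.abs_sum_le_sum_abs _ _
    rw [a1, a2]; linarith
  have hw1 := ((psd hn G).dotProduct_mulVec_zero_iff w).1 hw0
  have e2 : ∀ v, ∑ u ∈ Finset.univ.filter (fun u => G.Adj v u), w u = lam1 G * w v := by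
    intro v
    have := congrFun hw1 v
    rw [Matrix.sub_mulVec, Matrix.smul_mulVec, Matrix.one_mulVec, Pi.sub_apply, mulVec_eq] at this
    simp only [Pi.smul_apply, smul_eq_mul, Pi.zero_apply] at this
    linarith
  haveI : Nonempty (Fin n) := ⟨⟨0, hn⟩⟩
  obtain ⟨z, hz⟩ := Finite.exists_max w
  have hzpos : 0 < w z := by
    by_contra hc
    apply hy2
    ext v
    have h1 := hz v
    have h2 : |y v| ≤ 0 := by
      calc |y v| = w v := rfl
        _ ≤ w z := h1
        _ ≤ 0 := not_lt.1 hc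
    exact abs_nonpos_iff.1 h2
  refine ⟨fun v => w v / w z, fun v => ⟨div_nonneg (abs_nonneg _) hzpos.le, ?_⟩, ⟨z, div_self hzpos.ne'⟩, ?_⟩
  · exact (div_le_one hzpos).2 (hz v)
  · intro v
    rw [← Finset.sum_div, e2, mul_div_assoc]

end Spectral


section Embed
open Classical

lemma wheel_of_list {V : Type*} (G : SimpleGraph V) (k : ℕ) (hk : 1 ≤ k) (v : V) (l : List V)
    (hlen : l.length = 2 * k) (hnd : l.Nodup) (hch : l.IsChain G.Adj)
    (hv : ∀ u ∈ l, G.Adj v u)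
    (hcl : ∀ a ∈ l.head?, ∀ b ∈ l.getLast?, G.Adj b a) :
    ContainsCopy (wheelGraph (2 * k + 1)) G := by
  have hL : (v :: l).length = 2 * k + 1 := by simp [hlen]
  have hnd' : (v :: l).Nodup := by
    rw [List.nodup_cons]
    exact ⟨fun h => G.irrefl (hv v h), hnd⟩
  have key : ∀ a b : Fin (2 * k + 1), a.val = 0 → a ≠ b →
      G.Adj ((v :: l)[a.val]'(by omega)) ((v :: l)[b.val]'(by omega)) := by
    intro a b ha hab
    have hb : b.val ≠ 0 := fun h => hab (Fin.ext (by omega))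
    obtain ⟨m, hm⟩ := Nat.exists_eq_succ_of_ne_zero hb
    have : (v :: l)[b.val]'(by omega) = l[m]'(by omega) := by simp [hm]
    rw [this]
    simp only [ha, List.getElem_cons_zero]
    exact hv _ (List.getElem_mem _)
  have key2 : ∀ a b : Fin (2 * k + 1), a.val ≠ 0 → a.val + 1 = b.val →
      G.Adj ((v :: l)[a.val]'(by omega)) ((v :: l)[b.val]'(by omega)) := by
    intro a b ha hab
    obtain ⟨m, hm⟩ := Nat.exists_eq_succ_of_ne_zero ha
    have e1 : (v :: l)[b.val]'(by omega) = l[m+1]'(by omega) := by simp [← hab, hm]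
    have e2 : (v :: l)[a.val]'(by omega) = l[m]'(by omega) := by simp [hm]
    rw [e1, e2]
    exact List.isChain_iff_getElem.1 hch m (by omega)
  have key3 : ∀ a b : Fin (2 * k + 1), a.val = 1 → b.val = 2 * k + 1 - 1 →
      G.Adj ((v :: l)[a.val]'(by omega)) ((v :: l)[b.val]'(by omega)) := by
    intro a b ha hb
    have e1 : (v :: l)[b.val]'(by omega) = l[2 * k - 1]'(by omega) := by
      have : b.val = (2 * k - 1) + 1 := by omega
      simp [this]
    have e2 : (v :: l)[a.val]'(by omega) = l[0]'(by omega) := by simp [ha]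
    rw [e1, e2]
    apply SimpleGraph.Adj.symm
    apply hcl
    · rw [List.head?_eq_getElem?]; simp
    · simp only [List.getLast?_eq_getElem?, Option.mem_def, List.getElem?_eq_some_iff]
      exact ⟨by omega, by simp [hlen]⟩
  refine ⟨⟨fun i => (v :: l)[i.val]'(by omega), ?_⟩, ?_⟩
  · intro i j hij
    exact Fin.ext ((List.Nodup.getElem_inj_iff hnd').1 hij)
  · rintro a b ⟨hab, h⟩
    show G.Adj ((v :: l)[a.val]'(by omega)) ((v :: l)[b.val]'(by omega))
    by_cases ha : a.val = 0
    · exact key a b ha hab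
    by_cases hb : b.val = 0
    · exact SimpleGraph.Adj.symm (key b a hb hab.symm)
    rcases h with h | h | h | h | ⟨h1, h2⟩ | ⟨h1, h2⟩
    · exact absurd h ha
    · exact absurd h hb
    · exact key2 a b ha h
    · exact SimpleGraph.Adj.symm (key2 b a hb h)
    · exact key3 a b h1 h2
    · exact SimpleGraph.Adj.symm (key3 b a h1 h2)

/-- `good` contains, off any small set, a path with `p` vertices for each `1 ≤ p ≤ j+1`. -/
def SegProp {V : Type*} (G : SimpleGraph V) (good : Finset V) (j K : ℕ) : Prop :=
  ∀ F : Finset V, F.card ≤ K → ∀ p, 1 ≤ p → p ≤ j + 1 →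
    ∃ P : List V, P.length = p ∧ P.Nodup ∧ P.IsChain G.Adj ∧ ∀ w ∈ P, w ∈ good ∧ w ∉ F

lemma build_list {V : Type*} (G : SimpleGraph V) (good : Finset V) (j k : ℕ)
    (hseg : SegProp G good j (2 * k)) :
    ∀ us : List V, us ≠ [] → us.Nodup → (∀ u ∈ us, u ∉ good) →
      (∀ u ∈ us, ∀ w ∈ good, G.Adj u w) →
      ∀ L, 2 * us.length ≤ L → L ≤ (j + 2) * us.length → L ≤ 2 * k →
      ∃ l : List V, l.length = L ∧ l.Nodup ∧ l.IsChain G.Adj ∧ (∀ w ∈ l, w ∈ us ∨ w ∈ good) ∧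
        l.head? = us.head? ∧ (∀ b ∈ l.getLast?, b ∈ good) := by
  intro us
  induction us with
  | nil => intro h; exact absurd rfl h
  | cons u us ih =>
    intro _ hnd hng hadj L hL1 hL2 hL3
    simp only [List.length_cons] at hL1 hL2
    rw [List.nodup_cons] at hnd
    by_cases hus : us = []
    · subst hus
      simp only [List.length_nil] at hL1 hL2
      obtain ⟨P, hP1, hP2, hP3, hP4⟩ := hseg ∅ (by simp) (L - 1) (by omega) (by omega)
      have hPne : P ≠ [] := by rintro rfl; simp at hP1; omega
      refine ⟨u :: P, by simp [hP1]; omega, ?_, ?_, ?_, by simp, ?_⟩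
      · rw [List.nodup_cons]
        exact ⟨fun h => hng u (by simp) (hP4 u h).1, hP2⟩
      · rw [List.isChain_cons]
        refine ⟨fun y hy => hadj u (by simp) y (hP4 y (List.mem_of_mem_head? hy)).1, hP3⟩
      · intro w hw
        rcases List.mem_cons.1 hw with rfl | hw
        · left; simp
        · right; exact (hP4 w hw).1
      · intro b hb
        rw [List.getLast?_cons_of_ne_nil hPne] at hb
        exact (hP4 b (List.mem_of_getLast? hb)).1
    · have hlen : 1 ≤ us.length := List.length_pos_iff.2 hus
      -- choose `p`
      obtain ⟨p, hp1, hp2, hp3, hp4⟩ : ∃ p, 1 ≤ p ∧ p ≤ j + 1 ∧ 2 * us.length ≤ L - 1 - p ∧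
          L - 1 - p ≤ (j + 2) * us.length := by
        have e : (j + 2) * (us.length + 1) = (j + 2) * us.length + (j + 2) := by ring
        have e2 : 2 * us.length ≤ (j + 2) * us.length := Nat.mul_le_mul_right _ (by omega)
        by_cases h : L ≤ (j + 2) * us.length + 2
        · exact ⟨1, by omega, by omega, by omega, by omega⟩
        · exact ⟨L - 1 - (j + 2) * us.length, by omega, by omega, by omega, by omega⟩
      obtain ⟨l, hl1, hl2, hl3, hl4, hl5, hl6⟩ := ih hus hnd.2 (fun x hx => hng x (by simp [hx]))
        (fun x hx => hadj x (by simp [hx])) (L - 1 - p) hp3 hp4 (by omega)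
      obtain ⟨P, hP1, hP2, hP3, hP4⟩ := hseg l.toFinset
        ((List.toFinset_card_le l).trans (by omega)) p hp1 hp2
      have hPne : P ≠ [] := by rintro rfl; simp at hP1; omega
      have hlne : l ≠ [] := by rintro rfl; simp at hl1; omega
      refine ⟨u :: (P ++ l), by simp [hP1, hl1]; omega, ?_, ?_, ?_, by simp, ?_⟩
      · rw [List.nodup_cons, List.nodup_append]
        refine ⟨?_, hP2, hl2, ?_⟩
        · intro h
          rcases List.mem_append.1 h with h | h
          · exact hng u (by simp) (hP4 u h).1
          · rcases hl4 u h with h | h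
            · exact hnd.1 h
            · exact hng u (by simp) h
        · rintro a ha b hb rfl
          exact (hP4 a ha).2 (by simpa using hb)
      · rw [List.isChain_cons, List.isChain_append]
        refine ⟨?_, hP3, hl3, ?_⟩
        · intro y hy
          rw [List.head?_append_of_ne_nil _ hPne] at hy
          exact hadj u (by simp) y (hP4 y (List.mem_of_mem_head? hy)).1
        · intro a ha b hb
          rw [hl5] at hb
          exact SimpleGraph.Adj.symm (hadj b (by simp [List.mem_of_mem_head? hb]) a
            (hP4 a (List.mem_of_getLast? ha)).1)
      · intro w hw
        rcases List.mem_cons.1 hw with rfl | hw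
        · left; simp
        · rcases List.mem_append.1 hw with hw | hw
          · right; exact (hP4 w hw).1
          · rcases hl4 w hw with h | h
            · left; simp [h]
            · right; exact h
      · intro b hb
        rw [List.getLast?_cons_of_ne_nil (by simp [hPne]), List.getLast?_append_of_ne_nil _ hlne] at hb
        exact hl6 b hb

lemma wheel_of_seg {V : Type*} (G : SimpleGraph V) (k j : ℕ) (hk : 1 ≤ k) (v : V)
    (U good : Finset V) (hU1 : U.card ≤ k) (hU2 : 2 * k ≤ (j + 2) * U.card)
    (hvU : ∀ u ∈ U, G.Adj v u) (hvg : ∀ w ∈ good, G.Adj v w)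
    (hUg : ∀ u ∈ U, ∀ w ∈ good, G.Adj u w)
    (hseg : SegProp G good j (2 * k)) : ContainsCopy (wheelGraph (2 * k + 1)) G := by
  have hne : U.Nonempty := by
    rw [← Finset.card_pos]
    rcases Nat.eq_zero_or_pos U.card with h | h
    · rw [h] at hU2; omega
    · exact h
  have hlen := Finset.length_toList U
  obtain ⟨l, hl1, hl2, hl3, hl4, hl5, hl6⟩ := build_list G good j k hseg U.toList
    (by simpa using hne.ne_empty) (Finset.nodup_toList _)
    (fun u hu hg => G.irrefl (hUg u (by simpa using hu) u hg))
    (fun u hu => hUg u (by simpa using hu)) (2 * k) (by omega) (by rw [hlen]; exact hU2) le_rfl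
  refine wheel_of_list G k hk v l hl1 hl2 hl3 ?_ ?_
  · intro u hu
    rcases hl4 u hu with h | h
    · exact hvU u (by simpa using h)
    · exact hvg u h
  · intro a ha b hb
    rw [hl5] at ha
    exact SimpleGraph.Adj.symm (hUg a (by simpa using List.mem_of_mem_head? ha) b (hl6 b hb))

lemma seg_zero {V : Type*} (G : SimpleGraph V) (good : Finset V) (K : ℕ) (h : K < good.card) :
    SegProp G good 0 K := by
  intro F hF p hp1 hp2
  obtain rfl : p = 1 := by omega
  obtain ⟨w, hw1, hw2⟩ := Finset.exists_mem_notMem_of_card_lt_card (lt_of_le_of_lt hF h)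
  exact ⟨[w], rfl, by simp, by simp, by simpa using ⟨hw1, hw2⟩⟩

/-- Complete bipartite piece in a neighbourhood gives a wheel. -/
lemma wheel_of_common {V : Type*} (G : SimpleGraph V) (k : ℕ) (hk : 1 ≤ k) (v : V)
    (U good : Finset V) (hU1 : U.card = k) (hg : 2 * k < good.card)
    (hvU : ∀ u ∈ U, G.Adj v u) (hvg : ∀ w ∈ good, G.Adj v w)
    (hUg : ∀ u ∈ U, ∀ w ∈ good, G.Adj u w) : ContainsCopy (wheelGraph (2 * k + 1)) G :=
  wheel_of_seg G k 0 hk v U good hU1.le (by omega) hvU hvg hUg (seg_zero G good _ hg)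

/-- Stars inside a set `T` of bounded internal degree yield segments off a bad set. -/
lemma seg_of_stars {V : Type*} [Fintype V] (G : SimpleGraph V) (T B : Finset V) (j K D : ℕ)
    (hj : j ≤ 2)
    (hD : ∀ w ∈ T, (T.filter (fun u => G.Adj w u)).card ≤ D)
    (hc : (B.card + K) * (D + 1) < (T.filter (fun w => j ≤ (T.filter (fun u => G.Adj w u)).card)).card) :
    SegProp G (T \ B) j K := by
  intro F hF p hp1 hp2
  set Dj := T.filter (fun w => j ≤ (T.filter (fun u => G.Adj w u)).card) with hDj
  let X := (B ∪ F) ∩ T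
  let Y := X ∪ X.biUnion (fun w => T.filter (fun u => G.Adj w u))
  have hX : X.card ≤ B.card + K :=
    (Finset.card_le_card Finset.inter_subset_left).trans
      ((Finset.card_union_le _ _).trans (by omega))
  have hY : Y.card ≤ (B.card + K) * (D + 1) := by
    calc Y.card ≤ X.card + (X.biUnion (fun w => T.filter (fun u => G.Adj w u))).card :=
          Finset.card_union_le _ _
      _ ≤ X.card + X.card * D := by
          gcongr
          exact Finset.card_biUnion_le_card_mul _ _ _
            (fun w hw => hD w (Finset.mem_inter.1 hw).2)
      _ = X.card * (D + 1) := by ring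
      _ ≤ _ := Nat.mul_le_mul_right _ hX
  obtain ⟨w, hw1, hw2⟩ := Finset.exists_mem_notMem_of_card_lt_card (lt_of_le_of_lt hY hc)
  rw [hDj, Finset.mem_filter] at hw1
  obtain ⟨hwT, hwj⟩ := hw1
  have hok : ∀ u ∈ T, (u = w ∨ G.Adj w u) → u ∈ T \ B ∧ u ∉ F := by
    intro u hu h
    have : u ∉ X := by
      intro hx
      apply hw2
      rcases h with rfl | h
      · exact Finset.mem_union_left _ hx
      · apply Finset.mem_union_right
        rw [Finset.mem_biUnion]
        exact ⟨u, hx, by simp [hwT, h.symm]⟩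
    simp only [X, Finset.mem_inter, Finset.mem_union, hu, and_true, not_or] at this
    exact ⟨Finset.mem_sdiff.2 ⟨hu, this.1⟩, this.2⟩
  have hp : p = 1 ∨ p = 2 ∨ p = 3 := by omega
  rcases hp with rfl | rfl | rfl
  · exact ⟨[w], rfl, by simp, by simp, by simpa using hok w hwT (Or.inl rfl)⟩
  · have : 0 < (T.filter (fun u => G.Adj w u)).card := by omega
    obtain ⟨a, ha⟩ := Finset.card_pos.1 this
    rw [Finset.mem_filter] at ha
    refine ⟨[w, a], rfl, ?_, ?_, ?_⟩
    · simp [ha.2.ne]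
    · simp [ha.2]
    · intro y hy
      simp only [List.mem_cons, List.not_mem_nil, or_false] at hy
      rcases hy with rfl | rfl
      · exact hok _ hwT (Or.inl rfl)
      · exact hok _ ha.1 (Or.inr ha.2)
  · have : 1 < (T.filter (fun u => G.Adj w u)).card := by omega
    obtain ⟨a, ha, b, hb, hab⟩ := Finset.one_lt_card.1 this
    rw [Finset.mem_filter] at ha hb
    refine ⟨[a, w, b], rfl, ?_, ?_, ?_⟩
    · simp [ha.2.ne', hb.2.ne, hab]
    · simp [ha.2.symm, hb.2]
    · intro y hy
      simp only [List.mem_cons, List.not_mem_nil, or_false] at hy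
      rcases hy with rfl | rfl | rfl
      · exact hok _ ha.1 (Or.inr ha.2)
      · exact hok _ hwT (Or.inl rfl)
      · exact hok _ hb.1 (Or.inr hb.2)

end Embed


section KST
open Classical

lemma kst (k : ℕ) (hk : 1 ≤ k) (ε : ℝ) (hε : 0 < ε) : ∃ N : ℕ, ∀ n : ℕ, N ≤ n →
    ∀ G : SimpleGraph (Fin n), WheelFree (2 * k + 1) G → ∀ z : Fin n,
    (∑ w ∈ Finset.univ.filter (fun w => G.Adj z w),
      (((Finset.univ.filter (fun w => G.Adj z w)).filter (fun u => G.Adj w u)).card : ℝ))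
       ≤ ε * (n : ℝ) ^ 2 := by
  set C : ℝ := 2 * k * k.factorial * 4 ^ k / ε ^ k with hC
  have hCpos : 0 ≤ C := by positivity
  obtain ⟨N1, hN1⟩ := exists_nat_gt (2 * C / ε)
  obtain ⟨N2, hN2⟩ := exists_nat_gt (4 * k / ε)
  refine ⟨max (max N1 N2) 1, fun n hn G hG z => ?_⟩
  have hn1 : (N1 : ℝ) ≤ n := by exact_mod_cast (le_max_left _ _).trans ((le_max_left _ _).trans hn)
  have hn2 : (N2 : ℝ) ≤ n := by exact_mod_cast (le_max_right _ _).trans ((le_max_left _ _).trans hn)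
  have hn0 : (1 : ℝ) ≤ n := by exact_mod_cast (le_max_right _ _).trans hn
  have hnk : 4 * k ≤ ε * n := by
    have := (hN2.trans_le hn2).le
    rw [div_le_iff₀ hε] at this; linarith
  have hnC : 2 * C ≤ ε * n := by
    have := (hN1.trans_le hn1).le
    rw [div_le_iff₀ hε] at this; linarith
  set A := Finset.univ.filter (fun w => G.Adj z w) with hA
  have hAcard : A.card ≤ n := by simpa using Finset.card_le_univ A
  set d : Fin n → ℕ := fun w => (A.filter (fun u => G.Adj w u)).card with hd
  have hdn : ∀ w, d w ≤ n := fun w => (Finset.card_filter_le _ _).trans hAcard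
  -- double counting
  have h1 : ∑ w ∈ A, (d w).choose k ≤ 2 * k * n ^ k := by
    have e1 : ∀ w, (d w).choose k = ((A.powersetCard k).filter (fun U => ∀ u ∈ U, G.Adj w u)).card := by
      intro w
      rw [hd, ← Finset.card_powersetCard]
      congr 1
      ext U
      simp only [Finset.mem_powersetCard, Finset.mem_filter, Finset.subset_iff]
      constructor
      · rintro ⟨h, h'⟩
        exact ⟨⟨fun x hx => (h hx).1, h'⟩, fun x hx => (h hx).2⟩
      · rintro ⟨⟨h, h'⟩, h''⟩
        exact ⟨fun x hx => ⟨h hx, h'' x hx⟩, h'⟩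
    calc ∑ w ∈ A, (d w).choose k
        = ∑ w ∈ A, ((A.powersetCard k).filter (fun U => ∀ u ∈ U, G.Adj w u)).card :=
          Finset.sum_congr rfl (fun w _ => e1 w)
      _ = ∑ U ∈ A.powersetCard k, (A.filter (fun w => ∀ u ∈ U, G.Adj w u)).card :=
          Finset.sum_card_bipartiteAbove_eq_sum_card_bipartiteBelow
            (fun (w : Fin n) (U : Finset (Fin n)) => ∀ u ∈ U, G.Adj w u)
      _ ≤ ∑ U ∈ A.powersetCard k, 2 * k := by
          apply Finset.sum_le_sum
          intro U hU
          rw [Finset.mem_powersetCard] at hU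
          by_contra hcon
          push Not at hcon
          apply hG
          refine wheel_of_common G k hk z U _ hU.2 hcon ?_ ?_ ?_
          · intro u hu; simpa [hA] using hU.1 hu
          · intro w hw
            have := (Finset.mem_filter.1 hw).1
            simpa [hA] using this
          · intro u hu w hw
            exact ((Finset.mem_filter.1 hw).2 u hu).symm
      _ = (A.card.choose k) * (2 * k) := by simp
      _ ≤ n ^ k * (2 * k) := by
          gcongr
          exact (Nat.choose_le_pow _ _).trans (Nat.pow_le_pow_left hAcard k)
      _ = _ := by ring
  have h2 : ∀ w, (d w : ℝ) ≤ ε * n / 2 + n * ((d w).choose k * (k.factorial * 4 ^ k / (ε * n) ^ k)) := by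
    intro w
    by_cases h : (d w : ℝ) ≤ ε * n / 2
    · have : (0 : ℝ) ≤ n * ((d w).choose k * (k.factorial * 4 ^ k / (ε * n) ^ k)) := by positivity
      linarith
    · push Not at h
      have hkd : k ≤ d w := by
        have : (k : ℝ) ≤ d w := by linarith
        exact_mod_cast this
      have h3 := Nat.pow_le_choose (α := ℝ) k (d w)
      have h4 : (ε * n / 4) ≤ ((d w + 1 - k : ℕ) : ℝ) := by
        rw [Nat.cast_sub (by omega)]; push_cast; linarith
      have h5 : (ε * n / 4) ^ k ≤ ((d w + 1 - k : ℕ) : ℝ) ^ k := by gcongr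
      have hf : (0 : ℝ) < k.factorial := by exact_mod_cast Nat.factorial_pos k
      rw [div_le_iff₀ hf] at h3
      have hen : 0 < (ε * n) ^ k := by positivity
      have h6 : 1 ≤ ((d w).choose k : ℝ) * (k.factorial * 4 ^ k / (ε * n) ^ k) := by
        have : ((d w).choose k : ℝ) * (k.factorial * 4 ^ k / (ε * n) ^ k)
          = ((d w).choose k * k.factorial) * 4 ^ k / (ε * n) ^ k := by ring
        rw [this, le_div_iff₀ hen]
        have h7 : (ε * n / 4) ^ k * 4 ^ k = (ε * n) ^ k := by
          rw [← mul_pow]; congr 1; ring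
        have : (0:ℝ) < 4 ^ k := by positivity
        nlinarith
      have h8 : (d w : ℝ) ≤ n := by exact_mod_cast hdn w
      have : 0 ≤ ε * n / 2 := by positivity
      nlinarith
  calc ∑ w ∈ A, (d w : ℝ)
      ≤ ∑ w ∈ A, (ε * n / 2 + n * ((d w).choose k * (k.factorial * 4 ^ k / (ε * n) ^ k))) :=
        Finset.sum_le_sum (fun w _ => h2 w)
    _ = A.card * (ε * n / 2) + n * ((∑ w ∈ A, (d w).choose k : ℕ) * (k.factorial * 4 ^ k / (ε * n) ^ k)) := by
        rw [Finset.sum_add_distrib, ← Finset.mul_sum, ← Finset.sum_mul]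
        simp
    _ ≤ n * (ε * n / 2) + n * ((2 * k * n ^ k : ℕ) * (k.factorial * 4 ^ k / (ε * n) ^ k)) := by
        gcongr
    _ = n * (ε * n / 2) + n * C := by
        rw [hC]; push_cast
        have : (n : ℝ) ≠ 0 := by positivity
        rw [mul_pow]
        field_simp
    _ ≤ ε * n ^ 2 := by nlinarith

end KST


section Construct
open Classical

/-- Join of `R` with an independent set. -/
def joinIndep {V W : Type*} (R : SimpleGraph V) : SimpleGraph (V ⊕ W) where
  Adj a b := match a, b with
    | Sum.inl a, Sum.inl b => R.Adj a b
    | Sum.inl _, Sum.inr _ => True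
    | Sum.inr _, Sum.inl _ => True
    | Sum.inr _, Sum.inr _ => False
  symm := by
    refine ⟨?_⟩
    rintro (a | a) (b | b) h
    · exact SimpleGraph.Adj.symm h
    · trivial
    · trivial
    · exact h
  loopless := by
    refine ⟨?_⟩
    rintro (a | a) h
    · exact R.irrefl h
    · exact h

lemma joinIndep_free {V W : Type*} [Fintype V] (R : SimpleGraph V) (k : ℕ) (hk : 1 ≤ k)
    (β : V → ℕ) (hβ : ∀ a b, R.Adj a b → β a = β b)
    (hfib : ∀ b, (Finset.univ.filter (fun v => β v = b)).card < 2 * k)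
    (hreg : ∀ v, (Finset.univ.filter (fun u => R.Adj v u)).card = k - 1) :
    ¬ ContainsCopy (wheelGraph (2 * k + 1)) (joinIndep R : SimpleGraph (V ⊕ W)) := by
  rintro ⟨f, hf⟩
  have hhub : ∀ i : Fin (2 * k + 1), i.val ≠ 0 → (joinIndep R : SimpleGraph (V ⊕ W)).Adj (f 0) (f i) := by
    intro i hi
    apply hf
    exact ⟨fun h => hi (by rw [← h]; rfl), Or.inl rfl⟩
  have hcyc : ∀ i j : Fin (2 * k + 1), i.val + 1 = j.val →
      (joinIndep R : SimpleGraph (V ⊕ W)).Adj (f i) (f j) := by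
    intro i j hij
    apply hf
    refine ⟨fun h => ?_, Or.inr (Or.inr (Or.inl hij))⟩
    rw [h] at hij; omega
  rcases h0 : f 0 with v | w
  · -- hub in V
    have hsel : ∀ i : Fin k, ∃ j : Fin (2 * k + 1), (j.val = 2 * i.val + 1 ∨ j.val = 2 * i.val + 2) ∧
        ∃ u, f j = Sum.inl u ∧ R.Adj v u := by
      intro i
      have hi := i.2
      let j1 : Fin (2 * k + 1) := ⟨2 * i.val + 1, by omega⟩
      let j2 : Fin (2 * k + 1) := ⟨2 * i.val + 2, by omega⟩
      have h12 := hcyc j1 j2 rfl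
      have hh1 := hhub j1 (by simp [j1])
      have hh2 := hhub j2 (by simp [j2])
      rw [h0] at hh1 hh2
      rcases h1 : f j1 with a | a
      · rw [h1] at hh1
        exact ⟨j1, Or.inl rfl, a, h1, hh1⟩
      · rcases h2 : f j2 with b | b
        · rw [h2] at hh2
          exact ⟨j2, Or.inr rfl, b, h2, hh2⟩
        · rw [h1, h2] at h12
          exact absurd h12 id
    choose j hj u hu hadj using hsel
    have hinj : Function.Injective u := by
      intro a b hab
      have h1 : f (j a) = f (j b) := by rw [hu, hu, hab]
      have h2 := f.injective h1
      have h3 : (j a).val = (j b).val := by rw [h2]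
      rcases hj a with h | h <;> rcases hj b with h' | h' <;> exact Fin.ext (by omega)
    have := Finset.card_le_card_of_injOn (s := Finset.univ) (t := Finset.univ.filter (fun x => R.Adj v x))
      u (fun i _ => by simpa using hadj i) hinj.injOn
    rw [hreg] at this
    simp at this
    omega
  · have hsel : ∀ i : Fin (2 * k), ∃ u, f ⟨i.val + 1, by omega⟩ = Sum.inl u := by
      intro i
      have hh := hhub ⟨i.val + 1, by omega⟩ (by simp)
      rw [h0] at hh
      rcases h1 : f ⟨i.val + 1, by omega⟩ with a | a
      · exact ⟨a, rfl⟩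
      · rw [h1] at hh
        exact absurd hh id
    choose u hu using hsel
    have hinj : Function.Injective u := by
      intro a b hab
      have h1 : f ⟨a.val + 1, by omega⟩ = f ⟨b.val + 1, by omega⟩ := by rw [hu, hu, hab]
      have h2 := congrArg Fin.val (f.injective h1)
      exact Fin.ext (by simpa using h2)
    have hconst : ∀ m (hm : m < 2 * k), β (u ⟨m, hm⟩) = β (u ⟨0, by omega⟩) := by
      intro m
      induction m with
      | zero => intro _; rfl
      | succ m ih =>
        intro hm
        rw [← ih (by omega)]
        apply hβ
        have := hcyc ⟨m + 1, by omega⟩ ⟨m + 1 + 1, by omega⟩ rfl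
        have e1 := hu ⟨m, by omega⟩
        have e2 := hu ⟨m + 1, by omega⟩
        simp only at e1 e2
        rw [e1, e2] at this
        exact SimpleGraph.Adj.symm this
    have := Finset.card_le_card_of_injOn (s := Finset.univ)
      (t := Finset.univ.filter (fun x => β x = β (u ⟨0, by omega⟩)))
      u (fun i _ => by simpa using hconst i.1 i.2) hinj.injOn
    have h2 := hfib (β (u ⟨0, by omega⟩))
    simp at this
    omega

lemma lower_construct {V W : Type*} [Fintype V] [Fintype W] (R : SimpleGraph V) (k n : ℕ) (hk : 2 ≤ k)
    (β : V → ℕ) (hβ : ∀ a b, R.Adj a b → β a = β b)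
    (hfib : ∀ b, (Finset.univ.filter (fun v => β v = b)).card < 2 * k)
    (hreg : ∀ v, (Finset.univ.filter (fun u => R.Adj v u)).card = k - 1)
    (hn : Fintype.card V + Fintype.card W = n) (hV : 0 < Fintype.card V) :
    ∃ H : SimpleGraph (Fin n), WheelFree (2 * k + 1) H ∧ ∃ μ : ℝ, μ ≤ lam1 H ∧ (k : ℝ) - 1 ≤ μ ∧
      (Fintype.card V : ℝ) * Fintype.card W = μ * (μ - (k - 1)) := by
  have e : Fin n ≃ V ⊕ W := (Fintype.equivFinOfCardEq (by simp [hn])).symm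
  set J : SimpleGraph (V ⊕ W) := joinIndep R with hJ
  set H : SimpleGraph (Fin n) := J.comap e with hH
  refine ⟨H, ?_, ?_⟩
  · rintro ⟨f, hf⟩
    exact joinIndep_free R k (by omega) β hβ hfib hreg ⟨f.trans e.toEmbedding, fun a b h => hf a b h⟩
  set s : ℝ := (Fintype.card V : ℝ) with hs
  set t : ℝ := (Fintype.card W : ℝ) with ht
  have hs0 : 0 < s := by rw [hs]; exact_mod_cast hV
  have ht0 : 0 ≤ t := by rw [ht]; positivity
  have hk1 : (2 : ℝ) ≤ k := by exact_mod_cast hk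
  set q : ℝ := Real.sqrt (s * t + ((k - 1) / 2) ^ 2) with hq
  have hq2 : q ^ 2 = s * t + ((k - 1) / 2) ^ 2 := Real.sq_sqrt (by positivity)
  have hqk : ((k : ℝ) - 1) / 2 ≤ q := by
    apply Real.le_sqrt_of_sq_le
    nlinarith [mul_nonneg hs0.le ht0]
  have hmu : s * t = (q + (k - 1) / 2) * (q + (k - 1) / 2 - (k - 1)) := by nlinarith
  refine ⟨q + (k - 1) / 2, ?_, by linarith, hmu⟩
  set μ : ℝ := q + (k - 1) / 2 with hμ
  let y' : V ⊕ W → ℝ := Sum.elim (fun _ => μ) (fun _ => s)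
  have hVne : Nonempty V := Fintype.card_pos_iff.1 hV
  have hnpos : 0 < n := by omega
  have key : ∀ a : V ⊕ W, ∑ b, (if J.Adj a b then y' b else 0) = μ * y' a := by
    intro a
    rw [Fintype.sum_sum_type]
    rcases a with v | w
    · have h1 : ∀ b, J.Adj (Sum.inl v) (Sum.inl b) ↔ R.Adj v b := fun b => Iff.rfl
      have h2 : ∀ b : W, J.Adj (Sum.inl v) (Sum.inr b) ↔ True := fun b => Iff.rfl
      simp only [h1, h2, y', Sum.elim_inl, Sum.elim_inr, if_true]
      rw [← Finset.sum_filter, Finset.sum_const, hreg, Finset.sum_const, Finset.card_univ,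
        nsmul_eq_mul, nsmul_eq_mul, Nat.cast_sub (by omega : 1 ≤ k), ← ht]
      push_cast
      nlinarith
    · have h1 : ∀ b : V, J.Adj (Sum.inr w) (Sum.inl b) ↔ True := fun b => Iff.rfl
      have h2 : ∀ b : W, J.Adj (Sum.inr w) (Sum.inr b) ↔ False := fun b => Iff.rfl
      simp only [h1, h2, y', Sum.elim_inl, Sum.elim_inr, if_true, if_false]
      rw [Finset.sum_const, Finset.card_univ, nsmul_eq_mul, ← hs]
      simp; ring
  have hmupos : 0 < μ := by
    rw [hμ]; linarith
  apply le_lam1_of_eig hnpos H (fun v => y' (e v)) μ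
  · obtain ⟨v⟩ := hVne
    refine ⟨e.symm (Sum.inl v), ?_⟩
    simp only [Equiv.apply_symm_apply, y', Sum.elim_inl]
    exact hmupos.ne'
  · intro v
    rw [← key (e v), Finset.sum_filter]
    rw [← Equiv.sum_comp e]
    rfl

end Construct


section Regular
open Classical

lemma circ_exists (h m : ℕ) (hm : 2 * h + 1 ≤ m) :
    ∃ C : SimpleGraph (ZMod m), ∀ (_ : Fintype (ZMod m)) (v : ZMod m),
      (Finset.univ.filter (fun u => C.Adj v u)).card = 2 * h := by
  have : NeZero m := ⟨by omega⟩
  let P : ZMod m → Prop := fun d => d ≠ 0 ∧ (d.val ≤ h ∨ m - d.val ≤ h)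
  have hneg : ∀ d, P d → P (-d) := by
    rintro d ⟨h0, h1⟩
    have hv := ZMod.neg_val d
    rw [if_neg h0] at hv
    have hlt := ZMod.val_lt d
    refine ⟨neg_ne_zero.2 h0, ?_⟩
    rw [hv]
    omega
  let C : SimpleGraph (ZMod m) :=
    { Adj := fun a b => P (b - a)
      symm := ⟨fun a b hab => by
        have := hneg _ hab
        rwa [neg_sub] at this⟩
      loopless := ⟨fun a ha => ha.1 (sub_self a)⟩ }
  refine ⟨C, fun inst v => ?_⟩
  have hinst : inst = ZMod.fintype m := Subsingleton.elim _ _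
  subst hinst
  have h1 : (Finset.univ.filter (fun u => C.Adj v u)).card
      = (Finset.Icc 1 h ∪ Finset.Icc (m - h) (m - 1)).card := by
    apply Finset.card_bij (fun u _ => (u - v).val)
    · intro u hu
      obtain ⟨hp0, hp⟩ : P (u - v) := (Finset.mem_filter.1 hu).2
      have hlt := ZMod.val_lt (u - v)
      have h0 : (u - v).val ≠ 0 := by
        intro h; exact hp0 ((ZMod.val_eq_zero _).1 h)
      simp only [Finset.mem_union, Finset.mem_Icc]
      omega
    · intro a _ b _ hab
      have := ZMod.val_injective m hab
      exact sub_left_injective this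
    · intro b hb
      simp only [Finset.mem_union, Finset.mem_Icc] at hb
      have hv : ((b : ZMod m)).val = b := ZMod.val_cast_of_lt (by omega)
      refine ⟨v + (b : ZMod m), ?_, ?_⟩
      · refine Finset.mem_filter.2 ⟨Finset.mem_univ _, ?_⟩
        show P (v + (b : ZMod m) - v)
        rw [add_sub_cancel_left]
        refine ⟨?_, ?_⟩
        · intro h0
          rw [h0, ZMod.val_zero] at hv
          omega
        · rw [hv]; omega
      · rw [add_sub_cancel_left]; exact hv
  refine Eq.trans (b := (Finset.Icc 1 h ∪ Finset.Icc (m - h) (m - 1)).card) (by convert h1) ?_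
  rw [Finset.card_union_of_disjoint]
  · simp; omega
  · rw [Finset.disjoint_left]
    intro a ha hb
    rw [Finset.mem_Icc] at ha hb
    omega

lemma blocks_exists (k q : ℕ) (hk : 2 ≤ k) (B : Type) [Fintype B] (C : SimpleGraph B)
    (hC : ∀ v, (Finset.univ.filter (fun u => C.Adj v u)).card = k - 1)
    (hB : Fintype.card B < 2 * k) :
    ∃ (V : Type) (_ : Fintype V) (R : SimpleGraph V) (β : V → ℕ),
      (∀ a b, R.Adj a b → β a = β b) ∧
      (∀ b, (Finset.univ.filter (fun v => β v = b)).card < 2 * k) ∧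
      (∀ v, (Finset.univ.filter (fun u => R.Adj v u)).card = k - 1) ∧
      Fintype.card V = q * k + Fintype.card B := by
  let R : SimpleGraph ((Fin q × Fin k) ⊕ B) :=
    { Adj := fun a b => match a, b with
        | Sum.inl a, Sum.inl b => a.1 = b.1 ∧ a.2 ≠ b.2
        | Sum.inr a, Sum.inr b => C.Adj a b
        | _, _ => False
      symm := by
        refine ⟨?_⟩
        rintro (a | a) (b | b) h
        · exact ⟨h.1.symm, h.2.symm⟩
        · exact h
        · exact h
        · exact SimpleGraph.Adj.symm h
      loopless := by
        refine ⟨?_⟩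
        rintro (a | a) h
        · exact h.2 rfl
        · exact C.irrefl h }
  let β : (Fin q × Fin k) ⊕ B → ℕ := Sum.elim (fun a => a.1.val + 1) (fun _ => 0)
  refine ⟨(Fin q × Fin k) ⊕ B, inferInstance, R, β, ?_, ?_, ?_, by simp⟩
  · rintro (a | a) (b | b) h
    · simp only [β, Sum.elim_inl]
      rw [h.1]
    · exact absurd h id
    · exact absurd h id
    · rfl
  · intro b
    rcases b with _ | b
    · refine lt_of_le_of_lt ?_ hB
      rw [← Finset.card_univ, ← Finset.card_map (Function.Embedding.inr : B ↪ (Fin q × Fin k) ⊕ B)]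
      apply Finset.card_le_card
      rintro (a | a) ha
      · simp [β] at ha
      · simp
    · refine lt_of_le_of_lt (b := k) ?_ (by omega)
      refine le_trans ?_ (Finset.card_univ.trans (Fintype.card_fin k)).le
      apply Finset.card_le_card_of_injOn (fun x => match x with
        | Sum.inl a => a.2
        | Sum.inr _ => ⟨0, by omega⟩)
      · intro _ _; simp
      · rintro (x | x) hx (y | y) hy hxy
        · simp [β] at hx hy
          simp at hxy
          congr 1
          exact Prod.ext (Fin.ext (by omega)) hxy
        · simp [β] at hy
        · simp [β] at hx
        · simp [β] at hx
  · rintro (v | v)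
    · have : Finset.univ.filter (fun u => R.Adj (Sum.inl v) u) =
          ((Finset.univ.erase v.2).map ⟨fun x => (Sum.inl (v.1, x) : (Fin q × Fin k) ⊕ B),
            fun a b h => by simpa using h⟩) := by
        ext (u | u)
        · have : R.Adj (Sum.inl v) (Sum.inl u) ↔ v.1 = u.1 ∧ v.2 ≠ u.2 := Iff.rfl
          simp only [Finset.mem_filter, Finset.mem_univ, true_and, this, Finset.mem_map,
            Finset.mem_erase, and_true]
          constructor
          · rintro ⟨h1, h2⟩
            refine ⟨u.2, h2.symm, ?_⟩
            show (Sum.inl (v.1, u.2) : (Fin q × Fin k) ⊕ B) = Sum.inl u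
            rw [h1]
          · rintro ⟨x, hx, hxu⟩
            have hxu' : (Sum.inl (v.1, x) : (Fin q × Fin k) ⊕ B) = Sum.inl u := hxu
            obtain rfl := Sum.inl.inj hxu'
            exact ⟨rfl, hx.symm⟩
        · have : R.Adj (Sum.inl v) (Sum.inr u) ↔ False := Iff.rfl
          simp [this]
      rw [this, Finset.card_map, Finset.card_erase_of_mem (Finset.mem_univ _)]
      simp
    · rw [← hC v, ← Finset.card_map (Function.Embedding.inr : B ↪ (Fin q × Fin k) ⊕ B)]
      congr 1
      ext (u | u)
      · have : R.Adj (Sum.inr v) (Sum.inl u) ↔ False := Iff.rfl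
        simp [this]
      · have : R.Adj (Sum.inr v) (Sum.inr u) ↔ C.Adj v u := Iff.rfl
        simp [this]

lemma regular_exists (k s : ℕ) (hk : 2 ≤ k) (hs : k ≤ s) (h : Odd k ∨ k ∣ s) :
    ∃ (V : Type) (_ : Fintype V) (R : SimpleGraph V) (β : V → ℕ),
      (∀ a b, R.Adj a b → β a = β b) ∧
      (∀ b, (Finset.univ.filter (fun v => β v = b)).card < 2 * k) ∧
      (∀ v, (Finset.univ.filter (fun u => R.Adj v u)).card = k - 1) ∧
      Fintype.card V = s := by
  rcases h with h | h
  · obtain ⟨a, ha⟩ := h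
    have hmod := Nat.mod_lt s (by omega : 0 < k)
    have hdm := Nat.div_add_mod s k
    have hq : 1 ≤ s / k := Nat.div_pos hs (by omega)
    have : NeZero (k + s % k) := ⟨by omega⟩
    obtain ⟨C, hC⟩ := circ_exists a (k + s % k) (by omega)
    obtain ⟨V, i, R, β, h1, h2, h3, h4⟩ := blocks_exists k (s / k - 1) hk (ZMod (k + s % k)) C
      (fun v => by rw [hC]; omega) (by rw [ZMod.card]; omega)
    refine ⟨V, i, R, β, h1, h2, h3, ?_⟩
    rw [h4, ZMod.card, Nat.sub_mul, mul_comm (s / k) k]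
    have : k * 1 ≤ k * (s / k) := Nat.mul_le_mul_left _ hq
    omega
  · obtain ⟨q, rfl⟩ := h
    obtain ⟨V, i, R, β, h1, h2, h3, h4⟩ := blocks_exists k q hk Empty ⊥
      (fun v => v.elim) (by simp; omega)
    refine ⟨V, i, R, β, h1, h2, h3, ?_⟩
    rw [h4]; simp [mul_comm]

/-- Lower bound on the spectral radius of the extremal graph. -/
lemma lam1_lower (k n : ℕ) (hk : 2 ≤ k) (G : SimpleGraph (Fin n)) (hG : IsSpexWheel (2 * k + 1) G)
    (s t : ℕ) (hs : k ≤ s) (h : Odd k ∨ k ∣ s) (hst : s + t = n) :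
    (k : ℝ) - 1 ≤ lam1 G ∧ (s : ℝ) * t ≤ lam1 G * (lam1 G - (k - 1)) := by
  obtain ⟨V, i, R, β, h1, h2, h3, h4⟩ := regular_exists k s hk hs h
  obtain ⟨H, hH1, μ, hμ1, hμ2, hμ3⟩ := lower_construct (W := Fin t) R k n hk β h1 h2 h3
    (by rw [h4]; simpa using hst) (by omega)
  have hle := hμ1.trans (hG.2 H hH1)
  have hk' : (2 : ℝ) ≤ k := by exact_mod_cast hk
  rw [h4, Fintype.card_fin] at hμ3
  refine ⟨by linarith, ?_⟩
  rw [hμ3]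
  apply mul_le_mul hle (by linarith) (by linarith) (by linarith)

end Regular


section Subst
open Classical

lemma quad_split {n : ℕ} (K : SimpleGraph (Fin n)) (y : Fin n → ℝ) (v : Fin n) :
    ∑ a, y a * ∑ b ∈ Finset.univ.filter (fun b => K.Adj a b), y b =
    (∑ a ∈ Finset.univ.erase v, ∑ b ∈ Finset.univ.erase v, (if K.Adj a b then y a * y b else 0)) +
    2 * (y v * ∑ b ∈ Finset.univ.filter (fun b => K.Adj v b), y b) := by
  have e1 : ∀ a, y a * ∑ b ∈ Finset.univ.filter (fun b => K.Adj a b), y b =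
      ∑ b, (if K.Adj a b then y a * y b else 0) := by
    intro a
    rw [Finset.sum_filter, Finset.mul_sum]
    apply Finset.sum_congr rfl
    intro b _
    split_ifs <;> simp
  have e2 : ∀ a, ∑ b, (if K.Adj a b then y a * y b else 0) =
      (if K.Adj a v then y a * y v else 0) + ∑ b ∈ Finset.univ.erase v, (if K.Adj a b then y a * y b else 0) :=
    fun a => (Finset.add_sum_erase _ _ (Finset.mem_univ v)).symm
  rw [Finset.sum_congr rfl (fun a _ => e1 a), e1 v, ← Finset.add_sum_erase _ _ (Finset.mem_univ v)]
  have e3 : ∑ a ∈ Finset.univ.erase v, ∑ b, (if K.Adj a b then y a * y b else 0) =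
      ∑ a ∈ Finset.univ.erase v, (if K.Adj a v then y a * y v else 0) +
      ∑ a ∈ Finset.univ.erase v, ∑ b ∈ Finset.univ.erase v, (if K.Adj a b then y a * y b else 0) := by
    rw [← Finset.sum_add_distrib]
    exact Finset.sum_congr rfl (fun a _ => e2 a)
  rw [e3, e2 v]
  have e4 : ∑ a ∈ Finset.univ.erase v, (if K.Adj a v then y a * y v else 0) =
      ∑ b ∈ Finset.univ.erase v, (if K.Adj v b then y v * y b else 0) := by
    apply Finset.sum_congr rfl
    intro a _
    rw [K.adj_comm a v, mul_comm (y a)]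
  rw [e4]
  simp
  ring

/-- Replace the neighbourhood of `v` by a given set. -/
def substGraph {n : ℕ} (G : SimpleGraph (Fin n)) (v : Fin n) (T' : Finset (Fin n)) :
    SimpleGraph (Fin n) where
  Adj a b := a ≠ b ∧ ((a ≠ v ∧ b ≠ v ∧ G.Adj a b) ∨ (a = v ∧ b ∈ T') ∨ (b = v ∧ a ∈ T'))
  symm := by
    refine ⟨?_⟩
    rintro a b ⟨h, h'⟩
    refine ⟨h.symm, ?_⟩
    rcases h' with ⟨h1, h2, h3⟩ | h' | h'
    · exact Or.inl ⟨h2, h1, h3.symm⟩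
    · exact Or.inr (Or.inr h')
    · exact Or.inr (Or.inl h')
  loopless := ⟨fun a h => h.1 rfl⟩

lemma substGraph_free {n : ℕ} (G : SimpleGraph (Fin n)) (m : ℕ) (hG : WheelFree m G)
    (v : Fin n) (S T' : Finset (Fin n)) (D : ℕ)
    (hmiss : ∀ u ∈ T', (S.filter (fun w => ¬ G.Adj u w)).card ≤ D)
    (hS : m * (D + 1) < S.card) : WheelFree m (substGraph G v T') := by
  rintro ⟨f, hf⟩
  by_cases hv : ∃ i, f i = v
  · obtain ⟨i, hi⟩ := hv
    let F : Finset (Fin n) := (Finset.univ : Finset (Fin m)).biUnion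
      (fun j => insert (f j) (if f j ∈ T' then S.filter (fun w => ¬ G.Adj (f j) w) else ∅))
    have hF : F.card ≤ m * (D + 1) := by
      have := Finset.card_biUnion_le_card_mul (Finset.univ : Finset (Fin m))
        (fun j => insert (f j) (if f j ∈ T' then S.filter (fun w => ¬ G.Adj (f j) w) else ∅)) (D + 1) ?_
      · simpa using this
      · intro j _
        refine (Finset.card_insert_le _ _).trans ?_
        split_ifs with h
        · exact Nat.add_le_add_right (hmiss _ h) 1
        · simp
    obtain ⟨v', hv'1, hv'2⟩ := Finset.exists_mem_notMem_of_card_lt_card (lt_of_le_of_lt hF hS)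
    have hne : ∀ j, f j ≠ v' := by
      intro j h
      apply hv'2
      rw [Finset.mem_biUnion]
      exact ⟨j, Finset.mem_univ _, by rw [← h]; exact Finset.mem_insert_self _ _⟩
    have hadj : ∀ j, f j ∈ T' → G.Adj (f j) v' := by
      intro j hj
      by_contra hc
      apply hv'2
      rw [Finset.mem_biUnion]
      refine ⟨j, Finset.mem_univ _, Finset.mem_insert_of_mem ?_⟩
      rw [if_pos hj, Finset.mem_filter]
      exact ⟨hv'1, hc⟩
    have hfv : ∀ j, f j = v → j = i := fun j hj => f.injective (hj.trans hi.symm)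
    apply hG
    refine ⟨⟨fun j => if j = i then v' else f j, ?_⟩, ?_⟩
    · intro a b hab
      dsimp only at hab
      split_ifs at hab with h1 h2 h2
      · rw [h1, h2]
      · exact absurd hab.symm (hne b)
      · exact absurd hab (hne a)
      · exact f.injective hab
    · intro a b hab
      obtain ⟨h1, h2⟩ := hf a b hab
      show G.Adj (if a = i then v' else f a) (if b = i then v' else f b)
      rcases h2 with ⟨ha, hb, hG'⟩ | ⟨ha, hb⟩ | ⟨hb, ha⟩
      · rw [if_neg (fun h => ha (by rw [h, hi])), if_neg (fun h => hb (by rw [h, hi]))]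
        exact hG'
      · rw [if_pos (hfv a ha), if_neg]
        · exact (hadj b hb).symm
        · rintro rfl; exact h1 (ha.trans hi.symm)
      · rw [if_pos (hfv b hb), if_neg]
        · exact hadj a ha
        · rintro rfl; exact h1 (hi.trans hb.symm)
  · apply hG
    refine ⟨f, fun a b hab => ?_⟩
    obtain ⟨h1, h2⟩ := hf a b hab
    rcases h2 with ⟨ha, hb, hG'⟩ | ⟨ha, hb⟩ | ⟨hb, ha⟩
    · exact hG'
    · exact absurd ⟨a, ha⟩ hv
    · exact absurd ⟨b, hb⟩ hv

lemma subst_ineq {n : ℕ} (hn : 0 < n) (G : SimpleGraph (Fin n)) (m : ℕ) (hG : IsSpexWheel m G)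
    (x : Fin n → ℝ) (hx : ∀ v, 0 ≤ x v)
    (heig : ∀ v, ∑ u ∈ Finset.univ.filter (fun u => G.Adj v u), x u = lam1 G * x v)
    (hlam : 0 < lam1 G)
    (v : Fin n) (S T' : Finset (Fin n)) (D : ℕ)
    (hmiss : ∀ u ∈ T', (S.filter (fun w => ¬ G.Adj u w)).card ≤ D)
    (hS : m * (D + 1) < S.card) :
    ∑ u ∈ T'.erase v, x u ≤ lam1 G * x v := by
  set H := substGraph G v T' with hH
  have hle : lam1 H ≤ lam1 G := hG.2 H (substGraph_free G m hG.1 v S T' D hmiss hS)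
  set l := lam1 G with hl
  set σ := ∑ u ∈ T'.erase v, x u with hσ
  set c := σ / l with hc
  let y : Fin n → ℝ := fun a => if a = v then c else x a
  have hyv : y v = c := by simp [y]
  have hya : ∀ a, a ≠ v → y a = x a := fun a ha => by simp [y, ha]
  have hσ0 : 0 ≤ σ := Finset.sum_nonneg (fun u _ => hx u)
  have hN : Finset.univ.filter (fun b => H.Adj v b) = T'.erase v := by
    ext b
    simp only [Finset.mem_filter, Finset.mem_univ, true_and, Finset.mem_erase]
    constructor
    · rintro ⟨h1, h2⟩
      rcases h2 with ⟨h, _⟩ | ⟨_, h⟩ | ⟨h, _⟩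
      · exact absurd rfl h
      · exact ⟨h1.symm, h⟩
      · exact absurd h.symm h1
    · rintro ⟨h1, h2⟩
      exact ⟨h1.symm, Or.inr (Or.inl ⟨rfl, h2⟩)⟩
  have hr := rayleigh_le hn H y
  have hnormpos : 0 ≤ ∑ a, y a ^ 2 := Finset.sum_nonneg (fun a _ => sq_nonneg _)
  have hr2 : ∑ a, y a * ∑ b ∈ Finset.univ.filter (fun b => H.Adj a b), y b ≤ l * ∑ a, y a ^ 2 :=
    hr.trans (mul_le_mul_of_nonneg_right hle hnormpos)
  rw [quad_split H y v, hN] at hr2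
  have hG1 := quad_split G x v
  have hG2 : ∑ a, x a * ∑ b ∈ Finset.univ.filter (fun b => G.Adj a b), x b = l * ∑ a, x a ^ 2 := by
    rw [Finset.mul_sum]
    exact Finset.sum_congr rfl (fun a _ => by rw [heig]; ring)
  rw [hG2, heig v] at hG1
  have hoff : (∑ a ∈ Finset.univ.erase v, ∑ b ∈ Finset.univ.erase v, (if H.Adj a b then y a * y b else 0))
      = ∑ a ∈ Finset.univ.erase v, ∑ b ∈ Finset.univ.erase v, (if G.Adj a b then x a * x b else 0) := by
    apply Finset.sum_congr rfl
    intro a ha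
    apply Finset.sum_congr rfl
    intro b hb
    have ha' := (Finset.mem_erase.1 ha).1
    have hb' := (Finset.mem_erase.1 hb).1
    rw [hya a ha', hya b hb']
    have : H.Adj a b ↔ G.Adj a b := by
      constructor
      · rintro ⟨h1, h2⟩
        rcases h2 with ⟨_, _, h⟩ | ⟨h, _⟩ | ⟨h, _⟩
        · exact h
        · exact absurd h ha'
        · exact absurd h hb'
      · intro h
        exact ⟨h.ne, Or.inl ⟨ha', hb', h⟩⟩
    simp only [this]
  have hsum : ∑ b ∈ T'.erase v, y b = σ :=
    Finset.sum_congr rfl (fun b hb => hya b (Finset.mem_erase.1 hb).1)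
  have hn1 : ∑ a, y a ^ 2 = c ^ 2 + ∑ a ∈ Finset.univ.erase v, x a ^ 2 := by
    rw [← Finset.add_sum_erase _ _ (Finset.mem_univ v), hyv]
    congr 1
    exact Finset.sum_congr rfl (fun b hb => by rw [hya b (Finset.mem_erase.1 hb).1])
  have hn2 : ∑ a, x a ^ 2 = x v ^ 2 + ∑ a ∈ Finset.univ.erase v, x a ^ 2 :=
    (Finset.add_sum_erase _ _ (Finset.mem_univ v)).symm
  rw [hoff, hsum, hyv, hn1] at hr2
  rw [hn2] at hG1
  have hcl : l * c = σ := by rw [hc]; field_simp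
  have h1 : 2 * (c * σ) - l * c ^ 2 ≤ l * x v ^ 2 := by nlinarith
  have h2 : σ * c ≤ l * x v ^ 2 := by nlinarith
  have h3 : σ ^ 2 ≤ (l * x v) ^ 2 := by
    have : σ ^ 2 = l * (σ * c) := by rw [← hcl]; ring
    rw [this]
    nlinarith
  exact (sq_le_sq₀ hσ0 (mul_nonneg hlam.le (hx v))).1 h3

end Subst


section CutFacts
open Classical

lemma degIn_eq {n : ℕ} (G : SimpleGraph (Fin n)) (A : Finset (Fin n)) (v : Fin n) :
    degIn G A v = (A.filter (fun u => G.Adj v u)).card := rfl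

lemma cutCount_eq {n : ℕ} (G : SimpleGraph (Fin n)) (S : Finset (Fin n)) :
    cutCount G S = ∑ u ∈ S, degIn G Sᶜ u := by
  have h1 : cutCount G S = ((Finset.univ : Finset (Fin n × Fin n)).filter
    fun p => G.Adj p.1 p.2 ∧ p.1 ∈ S ∧ p.2 ∉ S).card := rfl
  rw [h1, Finset.card_eq_sum_card_fiberwise (f := Prod.fst) (t := S)]
  · apply Finset.sum_congr rfl
    intro u hu
    rw [degIn_eq]
    apply Finset.card_bij (fun p _ => p.2)
    · intro p hp
      simp only [Finset.mem_filter, Finset.mem_univ, true_and, Finset.mem_compl] at hp ⊢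
      rw [← hp.2]
      exact ⟨hp.1.2.2, hp.1.1⟩
    · intro p hp q hq h
      simp only [Finset.mem_filter, Finset.mem_univ, true_and] at hp hq
      exact Prod.ext (hp.2.trans hq.2.symm) h
    · intro w hw
      simp only [Finset.mem_filter, Finset.mem_compl] at hw
      exact ⟨(u, w), by simp [hw, hu], rfl⟩
  · intro p hp
    simp at hp
    simp [hp]

lemma cutCount_compl {n : ℕ} (G : SimpleGraph (Fin n)) (S : Finset (Fin n)) :
    cutCount G Sᶜ = cutCount G S := by
  have h1 : ∀ S, cutCount G S = ((Finset.univ : Finset (Fin n × Fin n)).filter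
    fun p => G.Adj p.1 p.2 ∧ p.1 ∈ S ∧ p.2 ∉ S).card := fun _ => rfl
  rw [h1, h1]
  apply Finset.card_bij (fun p _ => p.swap)
  · intro p hp
    simp only [Finset.mem_filter, Finset.mem_univ, true_and, Finset.mem_compl, not_not] at hp ⊢
    exact ⟨hp.1.symm, hp.2.2, hp.2.1⟩
  · intro p _ q _ h
    exact Prod.swap_injective h
  · intro p hp
    simp only [Finset.mem_filter, Finset.mem_univ, true_and] at hp
    refine ⟨p.swap, ?_, by simp⟩
    simp only [Finset.mem_filter, Finset.mem_univ, true_and, Finset.mem_compl, not_not]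
    exact ⟨hp.1.symm, hp.2.2, hp.2.1⟩

lemma IsMaxCut.swap {n : ℕ} {G : SimpleGraph (Fin n)} {S T : Finset (Fin n)} (h : IsMaxCut G S T) :
    IsMaxCut G T S := by
  obtain ⟨rfl, h2⟩ := h
  exact ⟨by simp, fun S' => by rw [cutCount_compl]; exact h2 S'⟩

lemma degIn_split {n : ℕ} (G : SimpleGraph (Fin n)) (A B : Finset (Fin n)) (h : Disjoint A B) (v : Fin n) :
    degIn G (A ∪ B) v = degIn G A v + degIn G B v := by
  rw [degIn_eq, degIn_eq, degIn_eq, Finset.filter_union, Finset.card_union_of_disjoint]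
  exact Finset.disjoint_filter_filter h

lemma degIn_swap {n : ℕ} (G : SimpleGraph (Fin n)) (A : Finset (Fin n)) (v : Fin n) :
    ∑ u ∈ A, degIn G {v} u = degIn G A v := by
  rw [degIn_eq, Finset.card_filter]
  apply Finset.sum_congr rfl
  intro u _
  rw [degIn_eq, Finset.card_filter, Finset.sum_singleton]
  simp only [G.adj_comm]

lemma maxcut_deg {n : ℕ} {G : SimpleGraph (Fin n)} {S T : Finset (Fin n)} (h : IsMaxCut G S T)
    (v : Fin n) (hv : v ∈ S) : degIn G S v ≤ degIn G T v := by
  obtain ⟨rfl, h2⟩ := h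
  have h3 := h2 (S.erase v)
  rw [cutCount_eq, cutCount_eq, ← Finset.add_sum_erase _ _ hv] at h3
  have h4 : (S.erase v)ᶜ = Sᶜ ∪ {v} := by
    ext u; simp
  have h5 : ∀ u, degIn G (Sᶜ ∪ {v}) u = degIn G Sᶜ u + degIn G {v} u :=
    fun u => degIn_split G _ _ (by simpa using hv) u
  rw [h4, Finset.sum_congr rfl (fun u _ => h5 u), Finset.sum_add_distrib, degIn_swap] at h3
  have h6 : degIn G S v = degIn G (S.erase v) v := by
    rw [degIn_eq, degIn_eq]
    congr 1
    ext u
    simp only [Finset.mem_filter, Finset.mem_erase]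
    constructor
    · rintro ⟨a, b⟩; exact ⟨⟨b.ne', a⟩, b⟩
    · rintro ⟨⟨_, a⟩, b⟩; exact ⟨a, b⟩
  omega

lemma sq_le_cut {n : ℕ} {G : SimpleGraph (Fin n)} {S T : Finset (Fin n)} (h : IsMaxCut G S T)
    (x : Fin n → ℝ) (hx : ∀ v, 0 ≤ x v ∧ x v ≤ 1) (z : Fin n) (hz : x z = 1)
    (heig : ∀ v, ∑ u ∈ Finset.univ.filter (fun u => G.Adj v u), x u = lam1 G * x v) (b : ℝ)
    (hb : (∑ w ∈ Finset.univ.filter (fun w => G.Adj z w),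
      (((Finset.univ.filter (fun w => G.Adj z w)).filter (fun u => G.Adj w u)).card : ℝ)) ≤ b) :
    lam1 G ^ 2 ≤ b + (cutCount G S : ℝ) := by
  set A := Finset.univ.filter (fun w => G.Adj z w) with hA
  have h1 : lam1 G ^ 2 = ∑ u ∈ A, ∑ w ∈ Finset.univ.filter (fun w => G.Adj u w), x w := by
    rw [Finset.sum_congr rfl (fun u _ => heig u), ← Finset.mul_sum, heig z, hz]; ring
  have h2 : ∀ u ∈ A, ∑ w ∈ Finset.univ.filter (fun w => G.Adj u w), x w ≤
      ((A.filter (fun w => G.Adj u w)).card : ℝ) + (degIn G Aᶜ u : ℝ) := by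
    intro u _
    have h3 : ∑ w ∈ Finset.univ.filter (fun w => G.Adj u w), x w ≤ (degIn G Finset.univ u : ℝ) := by
      rw [degIn_eq, ← nsmul_one, ← Finset.sum_const]
      exact Finset.sum_le_sum (fun w _ => (hx w).2)
    have h4 := degIn_split G A Aᶜ disjoint_compl_right u
    rw [Finset.union_compl] at h4
    rw [h4] at h3
    push_cast at h3
    exact h3
  have h5 := Finset.sum_le_sum h2
  rw [← h1, Finset.sum_add_distrib] at h5
  have h6 : (cutCount G A : ℝ) ≤ cutCount G S := by exact_mod_cast h.2 A
  rw [cutCount_eq] at h6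
  push_cast at h6
  linarith

lemma lam_lower_all (k : ℕ) (hk : 3 ≤ k) (n : ℕ) (hn : 4 * k ≤ n) (G : SimpleGraph (Fin n))
    (hG : IsSpexWheel (2 * k + 1) G) :
    (n : ℝ) / 2 ≤ lam1 G ∧ (n : ℝ) ^ 2 / 4 - (k : ℝ) ^ 2 ≤ lam1 G * (lam1 G - (k - 1)) := by
  set s := k * (n / 2 / k) with hs
  have hd := Nat.div_add_mod (n / 2) k
  have hm := Nat.mod_lt (n / 2) (show 0 < k by omega)
  have h1 : s ≤ n / 2 := Nat.mul_div_le _ _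
  have h2 : n < 2 * s + 2 * k := by omega
  have h3 : k ≤ s := by
    have : 1 ≤ n / 2 / k := (Nat.one_le_div_iff (by omega)).2 (by omega)
    nlinarith
  obtain ⟨h4, h5⟩ := lam1_lower k n (by omega) G hG s (n - s) h3 (Or.inr ⟨_, hs⟩) (by omega)
  rw [Nat.cast_sub (by omega)] at h5
  have a1 : (n : ℝ) < 2 * s + 2 * k := by exact_mod_cast h2
  have a2 : 2 * (s : ℝ) ≤ n := by
    have : 2 * s ≤ n := by omega
    exact_mod_cast this
  have a3 : (4 : ℝ) * k ≤ n := by exact_mod_cast hn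
  have a4 : (3 : ℝ) ≤ k := by exact_mod_cast hk
  have h6 : (n : ℝ) ^ 2 / 4 - (k : ℝ) ^ 2 ≤ lam1 G * (lam1 G - (k - 1)) := by
    refine le_trans ?_ h5
    nlinarith
  refine ⟨?_, h6⟩
  by_contra hc
  push Not at hc
  have h7 : lam1 G * (lam1 G - (k - 1)) ≤ (n : ℝ) / 2 * (n / 2 - (k - 1)) := by
    apply mul_le_mul hc.le (by linarith) (by linarith) (by positivity)
  nlinarith

lemma bad_card {n : ℕ} (G : SimpleGraph (Fin n)) (T U : Finset (Fin n)) (m : ℝ)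
    (h : ∀ u ∈ U, ((T.filter (fun w => ¬ G.Adj u w)).card : ℝ) ≤ m) :
    ((U.biUnion (fun u => T.filter (fun w => ¬ G.Adj u w))).card : ℝ) ≤ U.card * m := by
  have h1 : ((U.biUnion (fun u => T.filter (fun w => ¬ G.Adj u w))).card : ℝ) ≤
      ∑ u ∈ U, ((T.filter (fun w => ¬ G.Adj u w)).card : ℝ) := by
    exact_mod_cast Finset.card_biUnion_le
  refine h1.trans ?_
  rw [← nsmul_eq_mul]
  exact Finset.sum_le_card_nsmul _ _ _ h

lemma good_adj {n : ℕ} (G : SimpleGraph (Fin n)) (T T' U : Finset (Fin n)) (hT : T' ⊆ T) :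
    ∀ u ∈ U, ∀ w ∈ T' \ (U.biUnion (fun u => T.filter (fun w => ¬ G.Adj u w))), G.Adj u w := by
  intro u hu w hw
  simp only [Finset.mem_sdiff, Finset.mem_biUnion, Finset.mem_filter, not_exists, not_and, not_not] at hw
  exact hw.2 u hu (hT hw.1)

lemma card_sdiff_ge {α : Type*} [DecidableEq α] (A B : Finset α) :
    (A.card : ℝ) - B.card ≤ ((A \ B).card : ℝ) := by
  have := Finset.le_card_sdiff B A
  have h2 : A.card ≤ (A \ B).card + B.card := by omega
  have : (A.card : ℝ) ≤ (A \ B).card + B.card := by exact_mod_cast h2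
  linarith

/-- no vertex has many neighbours in both parts of the cut. -/
lemma not_both {n : ℕ} (G : SimpleGraph (Fin n)) (k : ℕ) (hk : 1 ≤ k) (hG : WheelFree (2 * k + 1) G)
    (S' T T' : Finset (Fin n)) (hT : T' ⊆ T) (m η : ℝ) (v : Fin n)
    (hS' : ∀ u ∈ S', ((T.filter (fun w => ¬ G.Adj u w)).card : ℝ) ≤ m)
    (h1 : (k : ℝ) ≤ η) (h2 : (k : ℝ) * m + 2 * k ≤ η) :
    (degIn G S' v : ℝ) ≤ η ∨ (degIn G T' v : ℝ) ≤ η := by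
  by_contra hc
  push Not at hc
  obtain ⟨hc1, hc2⟩ := hc
  have h3 : k ≤ (S'.filter (fun u => G.Adj v u)).card := by
    have : (k : ℝ) ≤ degIn G S' v := by linarith
    exact_mod_cast this
  obtain ⟨U, hU1, hU2⟩ := Finset.exists_subset_card_eq h3
  have hUS : ∀ u ∈ U, u ∈ S' ∧ G.Adj v u := fun u hu => by simpa using hU1 hu
  set B := U.biUnion (fun u => T.filter (fun w => ¬ G.Adj u w)) with hB
  have hBc := bad_card G T U m (fun u hu => hS' u (hUS u hu).1)
  rw [hU2, ← hB] at hBc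
  set g := T'.filter (fun u => G.Adj v u) with hg
  have hgc : (degIn G T' v : ℝ) = g.card := rfl
  have h4 := card_sdiff_ge g B
  apply hG
  refine wheel_of_common G k hk v U (g \ B) hU2 ?_ (fun u hu => (hUS u hu).2) ?_ ?_
  · have : (2 * k : ℝ) < (g \ B).card := by linarith
    exact_mod_cast this
  · intro w hw
    simp only [hg, Finset.mem_sdiff, Finset.mem_filter] at hw
    exact hw.1.2
  · exact good_adj G T g U ((Finset.filter_subset _ _).trans hT)

/-- few vertices with many non-neighbours. -/
lemma few_bad {n : ℕ} (G : SimpleGraph (Fin n)) (S T : Finset (Fin n)) (δ N : ℝ) (hδ : 0 < δ) (hN : 0 < N)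
    (h : (S.card : ℝ) * T.card ≤ ∑ u ∈ S, (degIn G T u : ℝ) + δ ^ 2 * N ^ 2) :
    ((S.filter (fun u => ¬ ((T.filter (fun w => ¬ G.Adj u w)).card : ℝ) ≤ δ * N)).card : ℝ) ≤ δ * N := by
  set Q := S.filter (fun u => ¬ ((T.filter (fun w => ¬ G.Adj u w)).card : ℝ) ≤ δ * N)
  have h1 : ∀ u, (degIn G T u : ℝ) + ((T.filter (fun w => ¬ G.Adj u w)).card : ℝ) = T.card := by
    intro u
    rw [degIn_eq]
    exact_mod_cast Finset.card_filter_add_card_filter_not _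
  have h2 : ∑ u ∈ S, ((T.filter (fun w => ¬ G.Adj u w)).card : ℝ) ≤ δ ^ 2 * N ^ 2 := by
    have h3 : ∑ u ∈ S, ((degIn G T u : ℝ) + ((T.filter (fun w => ¬ G.Adj u w)).card : ℝ)) =
      S.card * T.card := by
      rw [Finset.sum_congr rfl (fun u _ => h1 u)]; simp
    rw [Finset.sum_add_distrib] at h3
    linarith
  have h4 : Q.card * (δ * N) ≤ ∑ u ∈ Q, ((T.filter (fun w => ¬ G.Adj u w)).card : ℝ) := by
    rw [← nsmul_eq_mul]
    apply Finset.card_nsmul_le_sum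
    intro u hu
    exact (not_le.1 (Finset.mem_filter.1 hu).2).le
  have h5 : ∑ u ∈ Q, ((T.filter (fun w => ¬ G.Adj u w)).card : ℝ) ≤
      ∑ u ∈ S, ((T.filter (fun w => ¬ G.Adj u w)).card : ℝ) :=
    Finset.sum_le_sum_of_subset_of_nonneg (Finset.filter_subset _ _) (fun _ _ _ => by positivity)
  have h6 : (Q.card : ℝ) * (δ * N) ≤ (δ * N) * (δ * N) := by nlinarith
  exact le_of_mul_le_mul_right h6 (by positivity)

end CutFacts


section Structure
open Classical

lemma entry_lower {n : ℕ} (hn : 0 < n) (G : SimpleGraph (Fin n)) (k : ℕ)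
    (hG : IsSpexWheel (2 * k + 1) G) (x : Fin n → ℝ) (hx : ∀ v, 0 ≤ x v ∧ x v ≤ 1)
    (z : Fin n) (hz : x z = 1)
    (heig : ∀ v, ∑ u ∈ Finset.univ.filter (fun u => G.Adj v u), x u = lam1 G * x v)
    (hlam : 0 < lam1 G)
    (S T : Finset (Fin n)) (hT : T = Sᶜ) (S' T' : Finset (Fin n))
    (e : ℝ) (he : 1 ≤ e)
    (hS1 : ((S \ S').card : ℝ) ≤ e) (hT1 : ((T \ T').card : ℝ) ≤ e)
    (hmiss : ∀ u ∈ T', ((S.filter (fun w => ¬ G.Adj u w)).card : ℝ) ≤ e)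
    (hzS : (degIn G S' z : ℝ) ≤ (k + 1) * e) (hScard : (2 * k + 1) * (e + 1) < (S.card : ℝ)) :
    ∀ v, lam1 G - (k + 4) * e ≤ lam1 G * x v := by
  intro v
  have h1 : ∑ u ∈ T'.erase v, x u ≤ lam1 G * x v := by
    apply subst_ineq hn G (2 * k + 1) hG x (fun v => (hx v).1) heig hlam v S T' ⌊e⌋₊
    · intro u hu
      exact Nat.le_floor (hmiss u hu)
    · have h2 : (⌊e⌋₊ : ℝ) ≤ e := Nat.floor_le (by linarith)
      have : ((2 * k + 1 : ℕ) : ℝ) * ((⌊e⌋₊ : ℝ) + 1) < (S.card : ℝ) := by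
        refine lt_of_le_of_lt ?_ hScard
        push_cast
        gcongr
      exact_mod_cast this
  have h2 : ∑ u ∈ T', x u ≤ ∑ u ∈ T'.erase v, x u + 1 := by
    by_cases hv : v ∈ T'
    · rw [← Finset.add_sum_erase _ _ hv]
      linarith [(hx v).2]
    · rw [Finset.erase_eq_of_notMem hv]; linarith
  have h3 : lam1 G ≤ ∑ u ∈ T', x u + (k + 3) * e := by
    have h4 := heig z
    rw [hz, mul_one] at h4
    rw [← h4]
    have hsub : Finset.univ.filter (fun u => G.Adj z u) ⊆
        T' ∪ (S'.filter (fun u => G.Adj z u) ∪ ((S \ S') ∪ (T \ T'))) := by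
      intro u hu
      simp only [Finset.mem_filter, Finset.mem_univ, true_and] at hu
      simp only [Finset.mem_union, Finset.mem_filter, Finset.mem_sdiff, hT, Finset.mem_compl]
      tauto
    have h5 := Finset.sum_le_sum_of_subset_of_nonneg (f := x) hsub (fun u _ _ => (hx u).1)
    have hU : ∀ A B : Finset (Fin n), ∑ u ∈ A ∪ B, x u ≤ ∑ u ∈ A, x u + ∑ u ∈ B, x u := by
      intro A B
      rw [← Finset.sum_union_inter]
      linarith [Finset.sum_nonneg (s := A ∩ B) (f := x) (fun u _ => (hx u).1)]
    have hC : ∀ A : Finset (Fin n), ∑ u ∈ A, x u ≤ A.card := by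
      intro A
      rw [← nsmul_one, ← Finset.sum_const]
      exact Finset.sum_le_sum (fun w _ => (hx w).2)
    have a1 := hU T' (S'.filter (fun u => G.Adj z u) ∪ ((S \ S') ∪ (T \ T')))
    have a2 := hU (S'.filter (fun u => G.Adj z u)) ((S \ S') ∪ (T \ T'))
    have a3 := hU (S \ S') (T \ T')
    have b1 := hC (S'.filter (fun u => G.Adj z u))
    have b2 := hC (S \ S')
    have b3 := hC (T \ T')
    rw [degIn_eq] at hzS
    linarith
  linarith

lemma miss_upper {n : ℕ} (G : SimpleGraph (Fin n)) (k : ℕ)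
    (S T : Finset (Fin n)) (hcut : IsMaxCut G S T) (S' T' : Finset (Fin n)) (hT' : T' ⊆ T) (hS' : S' ⊆ S)
    (e : ℝ)
    (hS1 : ((S \ S').card : ℝ) ≤ e) (hT1 : ((T \ T').card : ℝ) ≤ e)
    (v : Fin n) (hv : v ∈ S) (hd : (n : ℝ) / 2 - (k + 4) * e ≤ (degIn G Finset.univ v : ℝ))
    (hn : (4 * k + 20) * e < n / 2) (hTc : (T.card : ℝ) ≤ n / 2 + e)
    (hnb : (degIn G S' v : ℝ) ≤ (k + 1) * e ∨ (degIn G T' v : ℝ) ≤ (k + 1) * e) (he : 0 < e) :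
    ((T.filter (fun w => ¬ G.Adj v w)).card : ℝ) ≤ (2 * k + 7) * e := by
  have hsp : ∀ A A' : Finset (Fin n), A' ⊆ A → (degIn G A v : ℝ) ≤ degIn G A' v + (A \ A').card := by
    intro A A' hA
    have h1 := degIn_split G A' (A \ A') Finset.disjoint_sdiff v
    rw [Finset.union_sdiff_of_subset hA] at h1
    have h2 : degIn G (A \ A') v ≤ (A \ A').card := Finset.card_filter_le _ _
    have : degIn G A v ≤ degIn G A' v + (A \ A').card := by omega
    exact_mod_cast this
  have h1 := hsp S S' hS'
  have h2 := hsp T T' hT'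
  have h3 : (degIn G S v : ℝ) ≤ degIn G T v := by exact_mod_cast maxcut_deg hcut v hv
  have h4 : (degIn G Finset.univ v : ℝ) = degIn G S v + degIn G T v := by
    have h := degIn_split G S T (by rw [hcut.1]; exact disjoint_compl_right) v
    rw [hcut.1, Finset.union_compl, ← hcut.1] at h
    exact_mod_cast h
  have h5 : (degIn G T v : ℝ) + ((T.filter (fun w => ¬ G.Adj v w)).card : ℝ) = T.card := by
    rw [degIn_eq]
    exact_mod_cast Finset.card_filter_add_card_filter_not _
  have hk0 : (0 : ℝ) ≤ k := by positivity
  rcases hnb with h | h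
  · linarith
  · nlinarith

set_option maxHeartbeats 2000000 in
lemma structure_thm (k : ℕ) (hk : 3 ≤ k) (κ : ℝ) (hκ : 0 < κ) :
    ∃ N : ℕ, ∀ n : ℕ, N ≤ n → ∀ G : SimpleGraph (Fin n), IsSpexWheel (2 * k + 1) G →
      ∀ S T : Finset (Fin n), IsMaxCut G S T → ∀ x : Fin n → ℝ, (∀ v, 0 ≤ x v ∧ x v ≤ 1) →
      (∃ z, x z = 1) →
      (∀ v, ∑ u ∈ Finset.univ.filter (fun u => G.Adj v u), x u = lam1 G * x v) →
      (∀ v, 1 / 2 ≤ x v) ∧ (n : ℝ) / 4 ≤ S.card ∧ (n : ℝ) / 4 ≤ T.card ∧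
      (∀ v ∈ S, ((T.filter (fun w => ¬ G.Adj v w)).card : ℝ) ≤ κ * n) ∧
      (∀ v ∈ T, ((S.filter (fun w => ¬ G.Adj v w)).card : ℝ) ≤ κ * n) := by
  have hk0 : (3 : ℝ) ≤ k := by exact_mod_cast hk
  set δ : ℝ := min (κ / (2 * k + 7)) (1 / (100 * k)) with hδ
  have hδ0 : 0 < δ := by positivity
  have hδ1 : (2 * k + 7) * δ ≤ κ := by
    have : δ ≤ κ / (2 * k + 7) := min_le_left _ _
    rw [le_div_iff₀ (by positivity)] at this
    linarith
  have hδ2 : δ * (100 * k) ≤ 1 := by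
    have : δ ≤ 1 / (100 * k) := min_le_right _ _
    rwa [le_div_iff₀ (by positivity)] at this
  obtain ⟨N1, hN1⟩ := kst k (by omega) (δ ^ 2) (by positivity)
  obtain ⟨N2, hN2⟩ := exists_nat_gt (2 * k / δ)
  refine ⟨max N1 (max N2 (4 * k)), ?_⟩
  intro n hn G hG S T hcut x hx ⟨z, hz⟩ heig
  have hn1 : N1 ≤ n := (le_max_left _ _).trans hn
  have hn2 : N2 ≤ n := (le_max_left _ _).trans ((le_max_right _ _).trans hn)
  have hn3 : 4 * k ≤ n := (le_max_right _ _).trans ((le_max_right _ _).trans hn)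
  have hnpos : 0 < n := by omega
  have hnR : (0 : ℝ) < n := by exact_mod_cast hnpos
  obtain ⟨hl1, -⟩ := lam_lower_all k hk n hn3 G hG
  have hlam : 0 < lam1 G := by linarith
  have hcutb := sq_le_cut hcut x hx z hz heig _ (hN1 n hn1 G hG.1 z)
  set e := δ * (n : ℝ) with he
  have he0 : 0 < e := by positivity
  have he1 : 2 * k ≤ e := by
    have h1 : (N2 : ℝ) ≤ n := by exact_mod_cast hn2
    have h2 : 2 * k / δ ≤ n := by linarith
    rw [div_le_iff₀ hδ0] at h2
    linarith
  have he2 : 100 * k * e ≤ n := by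
    rw [he]; nlinarith
  -- sizes
  have hST : (S.card : ℝ) + T.card = n := by
    have := Finset.card_add_card_compl S
    rw [← hcut.1, Fintype.card_fin] at this
    exact_mod_cast this
  have hcutS : (cutCount G S : ℝ) = ∑ u ∈ S, (degIn G T u : ℝ) := by
    rw [cutCount_eq, ← hcut.1]; push_cast; rfl
  have hcutT : (cutCount G S : ℝ) = ∑ u ∈ T, (degIn G S u : ℝ) := by
    rw [← cutCount_compl, cutCount_eq, compl_compl, ← hcut.1]; push_cast; rfl
  have hlsq : (n : ℝ) ^ 2 / 4 ≤ lam1 G ^ 2 := by nlinarith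
  have hst : (S.card : ℝ) * T.card ≤ (n : ℝ) ^ 2 / 4 := by
    rw [← hST]; nlinarith [sq_nonneg ((S.card : ℝ) - T.card)]
  have hcs : (cutCount G S : ℝ) ≤ S.card * T.card := by
    rw [hcutS, ← nsmul_eq_mul]
    apply Finset.sum_le_card_nsmul
    intro u _
    exact_mod_cast Finset.card_filter_le _ _
  have hdiff : ((S.card : ℝ) - n / 2) ^ 2 ≤ e ^ 2 := by
    have h1 : (S.card : ℝ) * T.card = n ^ 2 / 4 - ((S.card : ℝ) - n / 2) ^ 2 := by
      rw [show (T.card : ℝ) = n - S.card by linarith]; ring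
    have h2 : e ^ 2 = δ ^ 2 * n ^ 2 := by rw [he]; ring
    linarith
  obtain ⟨hd1, hd2⟩ := abs_le.1 (abs_le_of_sq_le_sq hdiff he0.le)
  have hS1 := few_bad G S T δ n hδ0 hnR (by linarith)
  have hT1 := few_bad G T S δ n hδ0 hnR (by linarith)
  rw [← he] at hS1 hT1
  set S' := S.filter (fun u => ((T.filter (fun w => ¬ G.Adj u w)).card : ℝ) ≤ e) with hS'
  set T' := T.filter (fun u => ((S.filter (fun w => ¬ G.Adj u w)).card : ℝ) ≤ e) with hT'
  have hS'S : S' ⊆ S := Finset.filter_subset _ _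
  have hT'T : T' ⊆ T := Finset.filter_subset _ _
  have hS2 : ((S \ S').card : ℝ) ≤ e := by
    rw [hS', ← Finset.filter_not]; exact hS1
  have hT2 : ((T \ T').card : ℝ) ≤ e := by
    rw [hT', ← Finset.filter_not]; exact hT1
  have hmS : ∀ u ∈ S', ((T.filter (fun w => ¬ G.Adj u w)).card : ℝ) ≤ e :=
    fun u hu => (Finset.mem_filter.1 hu).2
  have hmT : ∀ u ∈ T', ((S.filter (fun w => ¬ G.Adj u w)).card : ℝ) ≤ e :=
    fun u hu => (Finset.mem_filter.1 hu).2
  have hke : (3 : ℝ) * e ≤ k * e := by nlinarith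
  have hq1 : (k : ℝ) ≤ (k + 1) * e := by linarith
  have hq2 : (k : ℝ) * e + 2 * k ≤ (k + 1) * e := by linarith
  have hq3 : (2 * (k : ℝ) + 1) * (e + 1) < n / 2 - e := by
    have : (2 * (k : ℝ) + 1) * (e + 1) = 2 * (k * e) + 2 * k + e + 1 := by ring
    linarith
  have hnb : ∀ v, (degIn G S' v : ℝ) ≤ (k + 1) * e ∨ (degIn G T' v : ℝ) ≤ (k + 1) * e :=
    fun v => not_both G k (by omega) hG.1 S' T T' hT'T e _ v hmS hq1 hq2
  have hx1 : ∀ v, lam1 G - (k + 4) * e ≤ lam1 G * x v := by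
    rcases hnb z with h | h
    · exact entry_lower hnpos G k hG x hx z hz heig hlam S T hcut.1 S' T' e (by linarith) hS2 hT2
        hmT h (by linarith)
    · exact entry_lower hnpos G k hG x hx z hz heig hlam T S hcut.swap.1 T' S' e (by linarith) hT2 hS2
        hmS h (by linarith)
  have hdeg : ∀ v, (n : ℝ) / 2 - (k + 4) * e ≤ (degIn G Finset.univ v : ℝ) := by
    intro v
    have h1 := hx1 v
    rw [← heig v] at h1
    have h3 : ∑ w ∈ Finset.univ.filter (fun w => G.Adj v w), x w ≤ (degIn G Finset.univ v : ℝ) := by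
      rw [degIn_eq, ← nsmul_one, ← Finset.sum_const]
      exact Finset.sum_le_sum (fun w _ => (hx w).2)
    linarith
  have hfin : (2 * k + 7) * e ≤ κ * n := by
    rw [he, ← mul_assoc]
    exact mul_le_mul_of_nonneg_right hδ1 hnR.le
  refine ⟨?_, by linarith, by linarith, ?_, ?_⟩
  · intro v
    by_contra hc
    push Not at hc
    have h1 := hx1 v
    nlinarith
  · intro v hv
    exact (miss_upper G k S T hcut S' T' hT'T hS'S e hS2 hT2 v hv (hdeg v) (by linarith) (by linarith)
      (hnb v) he0).trans hfin
  · intro v hv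
    exact (miss_upper G k T S hcut.swap T' S' hS'S hT'T e hT2 hS2 v hv (hdeg v) (by linarith) (by linarith)
      (hnb v).symm he0).trans hfin

end Structure


section FinalPart
open Classical

lemma internal_lt {n : ℕ} (G : SimpleGraph (Fin n)) (k : ℕ) (hk : 1 ≤ k) (hG : WheelFree (2 * k + 1) G)
    (S T : Finset (Fin n)) (m : ℝ) (hm : 0 ≤ m)
    (hmiss : ∀ v ∈ S, ((T.filter (fun w => ¬ G.Adj v w)).card : ℝ) ≤ m)
    (hT : (k + 1) * m + 2 * k < (T.card : ℝ)) (v : Fin n) (hv : v ∈ S) : degIn G S v < k := by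
  by_contra hc
  push Not at hc
  rw [degIn_eq] at hc
  obtain ⟨U, hU1, hU2⟩ := Finset.exists_subset_card_eq hc
  have hUS : ∀ u ∈ U, u ∈ S ∧ G.Adj v u := fun u hu => by simpa using hU1 hu
  set V := insert v U with hV
  have hVc : (V.card : ℝ) ≤ k + 1 := by
    have : V.card ≤ k + 1 := by rw [← hU2]; exact Finset.card_insert_le _ _
    exact_mod_cast this
  have hVS : ∀ u ∈ V, u ∈ S := by
    intro u hu
    rcases Finset.mem_insert.1 hu with rfl | h
    · exact hv
    · exact (hUS u h).1
  have hBc := bad_card G T V m (fun u hu => hmiss u (hVS u hu))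
  have hga := good_adj G T T V le_rfl
  have h4 := card_sdiff_ge T (V.biUnion (fun u => T.filter (fun w => ¬ G.Adj u w)))
  apply hG
  refine wheel_of_common G k hk v U _ hU2 ?_ (fun u hu => (hUS u hu).2)
    (hga v (Finset.mem_insert_self _ _)) (fun u hu => hga u (Finset.mem_insert_of_mem hu))
  have h5 : (V.card : ℝ) * m ≤ (k + 1) * m := mul_le_mul_of_nonneg_right hVc hm
  have : (2 * k : ℝ) < ((T \ (V.biUnion (fun u => T.filter (fun w => ¬ G.Adj u w)))).card : ℝ) := by linarith
  exact_mod_cast this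

lemma internal_seg {n : ℕ} (G : SimpleGraph (Fin n)) (k j : ℕ) (hk : 1 ≤ k) (hj : j ≤ 2)
    (hG : WheelFree (2 * k + 1) G)
    (S T : Finset (Fin n)) (m : ℝ) (hm : 0 ≤ m)
    (hmiss : ∀ v ∈ S, ((T.filter (fun w => ¬ G.Adj v w)).card : ℝ) ≤ m)
    (hdS : ∀ v ∈ S, degIn G S v < k) (hdT : ∀ v ∈ T, degIn G T v < k)
    (hT : ((k + 1) * m + 2 * k) * (k + 1) < ((T.filter (fun w => j ≤ degIn G T w)).card : ℝ))
    (v : Fin n) (hv : v ∈ S) : (j + 2) * degIn G S v < 2 * k := by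
  by_contra hc
  push Not at hc
  have hU0 := hdS v hv
  rw [degIn_eq] at hc hU0
  set U := S.filter (fun u => G.Adj v u) with hU
  have hUS : ∀ u ∈ U, u ∈ S ∧ G.Adj v u := fun u hu => by simpa [hU] using hu
  set V := insert v U with hV
  have hVc : (V.card : ℝ) ≤ k + 1 := by
    have : V.card ≤ k + 1 := (Finset.card_insert_le _ _).trans (by omega)
    exact_mod_cast this
  have hVS : ∀ u ∈ V, u ∈ S := by
    intro u hu
    rcases Finset.mem_insert.1 hu with rfl | h
    · exact hv
    · exact (hUS u h).1
  have hBc := bad_card G T V m (fun u hu => hmiss u (hVS u hu))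
  have hga := good_adj G T T V le_rfl
  set B := V.biUnion (fun u => T.filter (fun w => ¬ G.Adj u w)) with hB
  apply hG
  have h5 : (V.card : ℝ) * m ≤ (k + 1) * m := mul_le_mul_of_nonneg_right hVc hm
  refine wheel_of_seg G k j hk v U (T \ B) (by omega) hc (fun u hu => (hUS u hu).2)
    (hga v (Finset.mem_insert_self _ _)) (fun u hu => hga u (Finset.mem_insert_of_mem hu)) ?_
  have hseg := seg_of_stars G T B j (2 * k) k hj (fun w hw => (hdT w hw).le) (by
    have : ((B.card : ℝ) + (2 * k : ℕ)) * ((k : ℝ) + 1) < ((T.filter (fun w => j ≤ degIn G T w)).card : ℝ) := by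
      refine lt_of_le_of_lt ?_ hT
      push_cast
      gcongr
      linarith
    exact_mod_cast this)
  convert hseg

lemma side_ineq {n : ℕ} (G : SimpleGraph (Fin n)) (x : Fin n → ℝ) (hx : ∀ v, 0 ≤ x v)
    (heig : ∀ v, ∑ u ∈ Finset.univ.filter (fun u => G.Adj v u), x u = lam1 G * x v)
    (S T : Finset (Fin n)) (hT : T = Sᶜ) :
    lam1 G * ∑ u ∈ S, x u ≤ ∑ w ∈ S, (degIn G S w : ℝ) * x w + S.card * ∑ w ∈ T, x w := by
  rw [Finset.mul_sum, Finset.sum_congr rfl (fun u _ => (heig u).symm)]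
  have h1 : ∀ u, ∑ w ∈ Finset.univ.filter (fun w => G.Adj u w), x w ≤
      ∑ w ∈ S, (if G.Adj u w then x w else 0) + ∑ w ∈ T, x w := by
    intro u
    rw [Finset.sum_filter, ← Finset.sum_add_sum_compl S, ← hT]
    gcongr with w _
    split_ifs
    · exact le_rfl
    · exact hx w
  refine (Finset.sum_le_sum (fun u _ => h1 u)).trans ?_
  rw [Finset.sum_add_distrib, Finset.sum_comm, Finset.sum_const, nsmul_eq_mul]
  gcongr with w _
  rw [← Finset.sum_filter, Finset.sum_const, nsmul_eq_mul, degIn_eq]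
  simp only [G.adj_comm w]
  exact le_rfl

lemma sum_deg_bound {n : ℕ} (G : SimpleGraph (Fin n)) (x : Fin n → ℝ) (hx : ∀ v, 0 ≤ x v ∧ x v ≤ 1)
    (k i : ℕ) (T : Finset (Fin n)) (hd : ∀ v ∈ T, degIn G T v < k) :
    ∑ w ∈ T, (degIn G T w : ℝ) * x w ≤ i * ∑ w ∈ T, x w +
      k * ((T.filter (fun w => i + 1 ≤ degIn G T w)).card : ℝ) := by
  rw [Finset.card_filter]
  push_cast
  rw [Finset.mul_sum, Finset.mul_sum, ← Finset.sum_add_distrib]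
  apply Finset.sum_le_sum
  intro w hw
  obtain ⟨h0, h1⟩ := hx w
  split_ifs with h
  · have : (degIn G T w : ℝ) ≤ k := by exact_mod_cast (hd w hw).le
    have h2 : (degIn G T w : ℝ) * x w ≤ k * 1 := by gcongr
    have h3 : 0 ≤ (i : ℝ) * x w := by positivity
    linarith
  · have : (degIn G T w : ℝ) ≤ i := by
      have : degIn G T w ≤ i := by omega
      exact_mod_cast this
    have h2 : (degIn G T w : ℝ) * x w ≤ i * x w := by gcongr
    linarith

lemma sum_deg_const {n : ℕ} (G : SimpleGraph (Fin n)) (x : Fin n → ℝ) (hx : ∀ v, 0 ≤ x v)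
    (a : ℝ) (T : Finset (Fin n)) (hd : ∀ v ∈ T, (degIn G T v : ℝ) ≤ a) :
    ∑ w ∈ T, (degIn G T w : ℝ) * x w ≤ a * ∑ w ∈ T, x w := by
  rw [Finset.mul_sum]
  exact Finset.sum_le_sum (fun w hw => mul_le_mul_of_nonneg_right (hd w hw) (hx w))

lemma prod_bound (l α β s t X Y A B : ℝ) (hX : 0 < X) (hY : 0 < Y) (hα : α ≤ l) (hβ : β ≤ l)
    (hs : 0 ≤ s) (h1 : l * X ≤ A + s * Y) (h2 : l * Y ≤ B + t * X) (hA : A ≤ α * X) (hB : B ≤ β * Y) :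
    (l - α) * (l - β) ≤ s * t := by
  have a1 : (l - α) * X ≤ s * Y := by linarith
  have a2 : (l - β) * Y ≤ t * X := by linarith
  have a3 : ((l - α) * X) * ((l - β) * Y) ≤ (s * Y) * (t * X) :=
    mul_le_mul a1 a2 (mul_nonneg (by linarith) hY.le) (by positivity)
  have a4 : ((l - α) * (l - β)) * (X * Y) ≤ (s * t) * (X * Y) := by linarith
  exact le_of_mul_le_mul_right a4 (by positivity)

lemma gap_contra (l α β n k : ℝ) (hα : 0 ≤ α) (hβ : 0 ≤ β) (h : α + β ≤ k - 1 - 1 / 4)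
    (h1 : (l - α) * (l - β) ≤ n ^ 2 / 4) (h2 : n ^ 2 / 4 - k ^ 2 ≤ l * (l - (k - 1)))
    (h3 : n / 2 ≤ l) (h4 : 8 * k ^ 2 < n) : False := by
  have h5 : 0 ≤ α * β := by positivity
  have h6 : (1 / 4) * l ≤ (k - 1 - (α + β)) * l :=
    mul_le_mul_of_nonneg_right (by linarith) (by nlinarith [sq_nonneg k])
  nlinarith

lemma half_prod (s t n : ℕ) (h : s + t = n) : s * t ≤ (n / 2) * (n - n / 2) := by
  obtain ⟨m, hm | hm⟩ : ∃ m, n = 2 * m ∨ n = 2 * m + 1 := ⟨n / 2, by omega⟩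
  · rw [show n / 2 = m by omega, show n - m = m by omega]
    rcases le_total s m with hs | hs
    · obtain ⟨d, rfl⟩ := Nat.exists_eq_add_of_le hs
      have : t = s + d + d := by omega
      subst this
      nlinarith
    · obtain ⟨d, rfl⟩ := Nat.exists_eq_add_of_le hs
      have : m = t + d := by omega
      subst this
      nlinarith
  · rw [show n / 2 = m by omega, show n - m = m + 1 by omega]
    rcases le_total s m with hs | hs
    · obtain ⟨d, rfl⟩ := Nat.exists_eq_add_of_le hs
      have : t = s + d + d + 1 := by omega
      subst this
      nlinarith
    · obtain ⟨d, rfl⟩ := Nat.exists_eq_add_of_le hs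
      have : m + 1 = t + d := by omega
      rcases d with _ | d
      · subst this; simp
      · have : m = t + d := by omega
        subst this
        nlinarith

end FinalPart


section Assemble
open Classical

/-- One-sided consequences used (in both directions) in the final argument. -/
lemma side_facts {n : ℕ} (G : SimpleGraph (Fin n)) (k : ℕ) (hk : 1 ≤ k)
    (hG : WheelFree (2 * k + 1) G) (x : Fin n → ℝ) (hx : ∀ v, 0 ≤ x v ∧ x v ≤ 1)
    (S T : Finset (Fin n)) (m q : ℝ) (hm : 0 ≤ m)
    (hmiss : ∀ v ∈ S, ((T.filter (fun w => ¬ G.Adj v w)).card : ℝ) ≤ m)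
    (hdS : ∀ v ∈ S, degIn G S v < k) (hdT : ∀ v ∈ T, degIn G T v < k)
    (hq : ((k + 1) * m + 2 * k) * (k + 1) < q)
    (hX : 100 * k * q ≤ ∑ w ∈ T, x w) (i : ℕ) (hi : i ≤ 1) :
    (∑ w ∈ T, (degIn G T w : ℝ) * x w ≤ (i + 1 / 100) * ∑ w ∈ T, x w) ∨
      ∀ v ∈ S, (i + 3) * degIn G S v < 2 * k := by
  rcases lt_or_ge ((T.filter (fun w => i + 1 ≤ degIn G T w)).card : ℝ) q with h | h
  · left
    have h1 := sum_deg_bound G x hx k i T hdT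
    have h2 : (k : ℝ) * ((T.filter (fun w => i + 1 ≤ degIn G T w)).card : ℝ) ≤ k * q := by gcongr
    linarith
  · right
    intro v hv
    exact internal_seg G k (i + 1) hk (by omega) hG S T m hm hmiss hdS hdT (lt_of_lt_of_le hq h) v hv

lemma final_contra {n : ℕ} (k : ℕ) (hk : 3 ≤ k) (hk4 : k ≠ 4) (hk5 : k ≠ 5)
    (l s t X Y A B : ℝ) (dS dT : Fin n → ℕ) (S T : Finset (Fin n))
    (hprod : ∀ α β : ℝ, 0 ≤ α → 0 ≤ β → α ≤ k → β ≤ k → A ≤ α * X → B ≤ β * Y → (l - α) * (l - β) ≤ s * t)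
    (hst : s * t ≤ (n : ℝ) ^ 2 / 4)
    (hl : (n : ℝ) / 2 ≤ l) (hl2 : (n : ℝ) ^ 2 / 4 - (k : ℝ) ^ 2 ≤ l * (l - (k - 1)))
    (hn : 8 * (k : ℝ) ^ 2 < n)
    (hodd : Odd k → s * t ≤ l * (l - (k - 1)))
    (hA : ∀ a : ℝ, (∀ v ∈ S, (dS v : ℝ) ≤ a) → A ≤ a * X)
    (hB : ∀ a : ℝ, (∀ v ∈ T, (dT v : ℝ) ≤ a) → B ≤ a * Y)
    (hS : ∀ v ∈ S, dS v ≤ k - 2) (hT : ∀ v ∈ T, dT v ≤ k - 2)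
    (hTS : ∀ i : ℕ, i ≤ 1 → (B ≤ (i + 1 / 100) * Y) ∨ ∀ v ∈ S, (i + 3) * dS v < 2 * k)
    (hSTi : ∀ i : ℕ, i ≤ 1 → (A ≤ (i + 1 / 100) * X) ∨ ∀ v ∈ T, (i + 3) * dT v < 2 * k) : False := by
  have hkR : (3 : ℝ) ≤ k := by exact_mod_cast hk
  have gap : ∀ α β : ℝ, 0 ≤ α → 0 ≤ β → α + β ≤ k - 1 - 1 / 4 → A ≤ α * X → B ≤ β * Y → False := by
    intro α β h1 h2 h3 h4 h5
    exact gap_contra l α β n k h1 h2 h3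
      ((hprod α β h1 h2 (by linarith) (by linarith) h4 h5).trans hst) hl2 hl hn
  have hcast : ∀ d : ℕ, d ≤ k - 2 → (d : ℝ) ≤ k - 2 := by
    intro d hd
    have : d + 2 ≤ k := by omega
    have : (d : ℝ) + 2 ≤ k := by exact_mod_cast this
    linarith
  have hA2 := hA (k - 2) (fun v hv => hcast _ (hS v hv))
  have hB2 := hB (k - 2) (fun v hv => hcast _ (hT v hv))
  rcases hTS 0 (by omega) with h | h1S
  · refine gap (k - 2) (1 / 100) (by linarith) (by norm_num) (by linarith) hA2 ?_
    simpa using h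
  rcases hSTi 0 (by omega) with h | h1T
  · refine gap (1 / 100) (k - 2) (by norm_num) (by linarith) (by linarith) ?_ hB2
    simpa using h
  have third : ∀ d : ℕ, (0 + 3) * d < 2 * k → (d : ℝ) ≤ (2 * k - 1) / 3 := by
    intro d hd
    have : 3 * d + 1 ≤ 2 * k := by omega
    have : 3 * (d : ℝ) + 1 ≤ 2 * k := by exact_mod_cast this
    linarith
  have hA3 := hA ((2 * k - 1) / 3) (fun v hv => third _ (h1S v hv))
  have hB3 := hB ((2 * k - 1) / 3) (fun v hv => third _ (h1T v hv))
  have key : (∀ v ∈ S, 2 * dS v < k) ∧ (∀ v ∈ T, 2 * dT v < k) := by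
    by_cases hk3 : k = 3
    · refine ⟨fun v hv => ?_, fun v hv => ?_⟩
      · have := h1S v hv; omega
      · have := h1T v hv; omega
    · have hk6 : (6 : ℝ) ≤ k := by
        have : 6 ≤ k := by omega
        exact_mod_cast this
      rcases hTS 1 le_rfl with h | h2S
      · exfalso
        refine gap ((2 * k - 1) / 3) (1 + 1 / 100) (by linarith) (by norm_num) (by linarith) hA3 ?_
        simpa using h
      rcases hSTi 1 le_rfl with h | h2T
      · exfalso
        refine gap (1 + 1 / 100) ((2 * k - 1) / 3) (by norm_num) (by linarith) (by linarith) ?_ hB3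
        simpa using h
      refine ⟨fun v hv => ?_, fun v hv => ?_⟩
      · have := h2S v hv; omega
      · have := h2T v hv; omega
  obtain ⟨kS, kT⟩ := key
  rcases Nat.even_or_odd k with he | ho
  · have half : ∀ d : ℕ, 2 * d < k → (d : ℝ) ≤ (k - 2) / 2 := by
      intro d hd
      obtain ⟨r, hr⟩ := he
      have : 2 * d + 2 ≤ k := by omega
      have : 2 * (d : ℝ) + 2 ≤ k := by exact_mod_cast this
      linarith
    exact gap ((k - 2) / 2) ((k - 2) / 2) (by linarith) (by linarith) (by linarith)
      (hA _ (fun v hv => half _ (kS v hv))) (hB _ (fun v hv => half _ (kT v hv)))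
  · have half : ∀ d : ℕ, 2 * d < k → (d : ℝ) ≤ (k - 1) / 2 := by
      intro d hd
      have : 2 * d + 1 ≤ k := by omega
      have : 2 * (d : ℝ) + 1 ≤ k := by exact_mod_cast this
      linarith
    have h1 := hprod ((k - 1) / 2) ((k - 1) / 2) (by linarith) (by linarith) (by linarith) (by linarith)
      (hA _ (fun v hv => half _ (kS v hv))) (hB _ (fun v hv => half _ (kT v hv)))
    have h2 := hodd ho
    nlinarith

end Assemble

/-- For `k ≥ 3`, `k ∉ {4,5}`, there is a vertex of internal degree
exactly `k - 1`. -/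
theorem exists_internal_degree_k_sub_one (k : ℕ) (hk : 3 ≤ k) (hk4 : k ≠ 4)
    (hk5 : k ≠ 5) :
    ∃ N : ℕ, ∀ n : ℕ, N ≤ n → ∀ G : SimpleGraph (Fin n), IsSpexWheel (2 * k + 1) G →
      ∀ S T : Finset (Fin n), IsMaxCut G S T →
        ∃ v : Fin n, (v ∈ S ∧ degIn G S v = k - 1) ∨ (v ∈ T ∧ degIn G T v = k - 1) := by
  classical
  have hkR : (3 : ℝ) ≤ k := by exact_mod_cast hk
  set θ : ℝ := 1 / (800 * k) with hθ
  have hθ0 : 0 < θ := by positivity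
  have hθk : 800 * k * θ = 1 := by rw [hθ]; field_simp
  set κ : ℝ := θ / (4 * (k + 1) ^ 2) with hκ
  have hκ0 : 0 < κ := by positivity
  have hκθ : (k + 1) ^ 2 * κ = θ / 4 := by rw [hκ]; field_simp
  obtain ⟨N1, hN1⟩ := structure_thm k hk κ hκ0
  obtain ⟨N2, hN2⟩ := exists_nat_gt (4 * k * (k + 1) / θ)
  refine ⟨max N1 (max N2 (8 * k ^ 2 + 1)), ?_⟩
  intro n hn G hG S T hcut
  have hn1 : N1 ≤ n := (le_max_left _ _).trans hn
  have hn2 : N2 ≤ n := (le_max_left _ _).trans ((le_max_right _ _).trans hn)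
  have hn3 : 8 * k ^ 2 + 1 ≤ n := (le_max_right _ _).trans ((le_max_right _ _).trans hn)
  have hn4 : 4 * k ≤ n := by nlinarith
  have hnpos : 0 < n := by omega
  have hnR : (0 : ℝ) < n := by exact_mod_cast hnpos
  have hn3R : 8 * (k : ℝ) ^ 2 + 1 ≤ n := by exact_mod_cast hn3
  have hn2R : 4 * k * (k + 1) ≤ θ * n := by
    have h1 : (N2 : ℝ) ≤ n := by exact_mod_cast hn2
    have h2 : 4 * k * (k + 1) / θ ≤ n := by linarith
    rw [div_le_iff₀ hθ0] at h2
    linarith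
  obtain ⟨x, hx, hz, heig⟩ := perron hnpos G
  obtain ⟨hx2, hSc, hTc, hmS, hmT⟩ := hN1 n hn1 G hG S T hcut x hx hz heig
  obtain ⟨hl, hl2⟩ := lam_lower_all k hk n hn4 G hG
  have hST : S.card + T.card = n := by
    have := Finset.card_add_card_compl S
    rwa [← hcut.1, Fintype.card_fin] at this
  have hSTR : (S.card : ℝ) + T.card = n := by exact_mod_cast hST
  have hm0 : 0 ≤ κ * n := by positivity
  have hq : ((k + 1) * (κ * n) + 2 * k) * (k + 1) < θ * n := by
    have h1 : ((k + 1) * (κ * n) + 2 * k) * (k + 1) = ((k + 1) ^ 2 * κ) * n + 2 * k * (k + 1) := by ring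
    rw [h1, hκθ]
    have : 0 < θ * n := by positivity
    linarith
  have hθn : 800 * k * (θ * n) = n := by rw [← mul_assoc, hθk, one_mul]
  have hθ4 : θ * n ≤ n / 4 := by
    have : 0 < θ * n := by positivity
    nlinarith
  have hq0 : (k + 1) * (κ * n) + 2 * k < θ * n := by
    refine lt_of_le_of_lt ?_ hq
    apply le_mul_of_one_le_right (by positivity) (by linarith)
  have hdS : ∀ v ∈ S, degIn G S v < k := fun v hv =>
    internal_lt G k (by omega) hG.1 S T (κ * n) hm0 hmS (by linarith) v hv
  have hdT : ∀ v ∈ T, degIn G T v < k := fun v hv =>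
    internal_lt G k (by omega) hG.1 T S (κ * n) hm0 hmT (by linarith) v hv
  by_contra hcon
  push Not at hcon
  have hdS2 : ∀ v ∈ S, degIn G S v ≤ k - 2 := by
    intro v hv
    have h1 := hdS v hv
    have h2 := (hcon v).1 hv
    omega
  have hdT2 : ∀ v ∈ T, degIn G T v ≤ k - 2 := by
    intro v hv
    have h1 := hdT v hv
    have h2 := (hcon v).2 hv
    omega
  have hXb : ∀ A : Finset (Fin n), (n : ℝ) / 4 ≤ A.card → 100 * k * (θ * n) ≤ ∑ w ∈ A, x w := by
    intro A hA
    have h1 : A.card • (1 / 2 : ℝ) ≤ ∑ w ∈ A, x w := Finset.card_nsmul_le_sum _ _ _ (fun w _ => hx2 w)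
    rw [nsmul_eq_mul] at h1
    linarith
  have hXS := hXb S hSc
  have hXT := hXb T hTc
  have hX0 : 0 < 100 * k * (θ * n) := by positivity
  have hx0 : ∀ v, 0 ≤ x v := fun v => (hx v).1
  refine final_contra (n := n) k hk hk4 hk5 (lam1 G) S.card T.card (∑ w ∈ S, x w) (∑ w ∈ T, x w)
    (∑ w ∈ S, (degIn G S w : ℝ) * x w) (∑ w ∈ T, (degIn G T w : ℝ) * x w)
    (degIn G S) (degIn G T) S T ?_ ?_ hl hl2 (by linarith) ?_
    (fun a h => sum_deg_const G x hx0 a S h) (fun a h => sum_deg_const G x hx0 a T h) hdS2 hdT2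
    (fun i hi => side_facts G k (by omega) hG.1 x hx S T (κ * n) (θ * n) hm0 hmS hdS hdT hq hXT i hi)
    (fun i hi => side_facts G k (by omega) hG.1 x hx T S (κ * n) (θ * n) hm0 hmT hdT hdS hq hXS i hi)
  · intro α β h1 h2 h3 h4 h5 h6
    have hkl : (k : ℝ) ≤ lam1 G := by nlinarith
    exact prod_bound (lam1 G) α β _ _ _ _ _ _ (by linarith) (by linarith) (by linarith) (by linarith)
      (by positivity) (side_ineq G x hx0 heig S T hcut.1) (side_ineq G x hx0 heig T S hcut.swap.1) h5 h6
  · rw [← hSTR]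
    nlinarith [sq_nonneg ((S.card : ℝ) - T.card)]
  · intro ho
    have h1 := (lam1_lower k n (by omega) G hG (n / 2) (n - n / 2) (by omega) (Or.inl ho) (by omega)).2
    have h2 : ((S.card * T.card : ℕ) : ℝ) ≤ ((n / 2 * (n - n / 2) : ℕ) : ℝ) :=
      Nat.cast_le.2 (half_prod _ _ _ hST)
    rw [Nat.cast_mul, Nat.cast_mul] at h2
    exact h2.trans h1
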